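/- arXiv:1402.2064 — 3 statements merged into one kernel-verified Lean document; each statement's English description precedes it below -/
import Mathlib

section
/- Let d ≥ 1 and let H be a finite hypergraph of d-intervals. Then τ(H) ≤ (d² − d + 1)·ν(H). -/
/-- A `d`-interval: a union of at most `d` pairwise disjoint closed intervals
on the real line. -/
def IsDInterval (d : ℕ) (h : Set ℝ) : Prop :=
  ∃ (n : ℕ) (a b : Fin n → ℝ), n ≤ d ∧ (∀ i, a i ≤ b i) ∧
    (Set.univ : Set (Fin n)).PairwiseDisjoint (fun i => Set.Icc (a i) (b i)) ∧
    h = ⋃ i, Set.Icc (a i) (b i)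

/-- The covering (transversal) number: the minimum size of a finite set of
points meeting every edge. -/
noncomputable def tau {α : Type*} (H : Set (Set α)) : ℕ :=
  sInf {n | ∃ C : Finset α, (∀ e ∈ H, ∃ x ∈ C, x ∈ e) ∧ C.card = n}

/-- The matching number: the maximum size of a set of pairwise disjoint edges. -/
noncomputable def nu {α : Type*} (H : Set (Set α)) : ℕ :=
  sSup {n | ∃ M : Finset (Set α), ↑M ⊆ H ∧
    (M : Set (Set α)).PairwiseDisjoint id ∧ M.card = n}

namespace DInt

/-- Dominance of a set with respect to a family of rankings. -/
def Dom {I V : Type*} (r : I → V → ℕ) (S : Finset V) : Prop :=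
  ∀ y, ∃ i, ∀ x ∈ S, r i y ≤ r i x

lemma even_doors {I V : Type*} [Fintype I] [DecidableEq I] [DecidableEq V]
    (c : V → I) (i0 : I) (S : Finset V) (hS : S.card = Fintype.card I)
    (hc : S.image c ≠ Finset.univ) :
    Even (S.filter (fun x => (S.erase x).image c = Finset.univ.erase i0)).card := by
  rcases Finset.eq_empty_or_nonempty
    (S.filter (fun x => (S.erase x).image c = Finset.univ.erase i0)) with h | ⟨x, hx⟩
  · simp [h]
  have inj : ∀ y ∈ S, (S.erase y).image c = Finset.univ.erase i0 →
      Set.InjOn c (S.erase y : Finset V) := by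
    intro y hy h
    apply Finset.card_image_iff.1
    rw [h, Finset.card_erase_of_mem hy, Finset.card_erase_of_mem (Finset.mem_univ _), hS,
      Finset.card_univ]
  rw [Finset.mem_filter] at hx
  obtain ⟨hxS, hx⟩ := hx
  have hins : S.image c = insert (c x) (Finset.univ.erase i0) := by
    rw [← hx, ← Finset.image_insert, Finset.insert_erase hxS]
  have hcx : c x ≠ i0 := by
    intro h
    apply hc
    rw [hins, h, Finset.insert_erase (Finset.mem_univ _)]
  have : c x ∈ (S.erase x).image c := by rw [hx]; simp [hcx]
  obtain ⟨x', hx', hcc⟩ := Finset.mem_image.1 this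
  have hne : x' ≠ x := (Finset.mem_erase.1 hx').1
  have hx'S : x' ∈ S := (Finset.mem_erase.1 hx').2
  have : S.filter (fun x => (S.erase x).image c = Finset.univ.erase i0) = {x, x'} := by
    ext y
    simp only [Finset.mem_filter, Finset.mem_insert, Finset.mem_singleton]
    constructor
    · rintro ⟨hyS, hy⟩
      by_contra hcon
      push Not at hcon
      apply hne
      apply inj y hyS hy _ _ hcc
      · simp [hx'S, hcon.2.symm]
      · simp [hxS, hcon.1.symm]
    · rintro (rfl | rfl)
      · exact ⟨hxS, hx⟩
      · refine ⟨hx'S, ?_⟩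
        rw [← hx]
        ext j
        simp only [Finset.mem_image, Finset.mem_erase]
        constructor
        · rintro ⟨u, ⟨h1, h2⟩, rfl⟩
          by_cases hu : u = x
          · subst hu; exact ⟨y, ⟨hne, hx'S⟩, hcc⟩
          · exact ⟨u, ⟨hu, h2⟩, rfl⟩
        · rintro ⟨u, ⟨h1, h2⟩, rfl⟩
          by_cases hu : u = y
          · subst hu; exact ⟨x, ⟨hne.symm, hxS⟩, hcc.symm⟩
          · exact ⟨u, ⟨hu, h2⟩, rfl⟩
  rw [this, Finset.card_pair hne.symm]
  exact even_two

lemma half_door {I V : Type*} [Fintype I] [DecidableEq I] [Fintype V] [DecidableEq V]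
    (r : I → V → ℕ) (hr : ∀ i, Function.Injective (r i)) (R : Finset V) (m : I → V)
    (hm : ∀ i, ∀ x ∈ R, r i (m i) ≤ r i x) (hmR : ∀ i, m i ∈ R) (hR : Dom r R) (a : I)
    (hs : ∀ x ∈ R, ∃ i, i ≠ a ∧ m i = x) (z : V) (hz : ∀ i, i ≠ a → r i (m i) < r i z) :
    ∃ x, x ∉ R ∧ Dom r (insert x R) ∧ (∀ i, i ≠ a → r i (m i) < r i x) ∧
      ∀ y, (∀ i, i ≠ a → r i (m i) < r i y) → Dom r (insert y R) → y = x := by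
  obtain ⟨x, hx, hmax⟩ := Finset.exists_max_image
    (Finset.univ.filter (fun y => ∀ i, i ≠ a → r i (m i) < r i y)) (r a)
    ⟨z, by simpa using hz⟩
  simp only [Finset.mem_filter, Finset.mem_univ, true_and] at hx hmax
  refine ⟨x, ?_, ?_, hx, ?_⟩
  · intro hxR
    obtain ⟨i, hi, rfl⟩ := hs x hxR
    exact lt_irrefl _ (hx i hi)
  · intro y
    by_cases hy : ∀ i, i ≠ a → r i (m i) < r i y
    · refine ⟨a, ?_⟩
      obtain ⟨i, hi⟩ := hR y
      have hia : i = a := by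
        by_contra h
        exact absurd (hi _ (hmR i)) (not_le.2 (hy i h))
      subst hia
      intro u hu
      rcases Finset.mem_insert.1 hu with rfl | hu
      · exact hmax y hy
      · exact hi u hu
    · push Not at hy
      obtain ⟨i, hi, hle⟩ := hy
      refine ⟨i, ?_⟩
      intro u hu
      rcases Finset.mem_insert.1 hu with rfl | hu
      · exact hle.trans (hx i hi).le
      · exact hle.trans (hm i u hu)
  · intro y hy hD
    obtain ⟨i, hi⟩ := hD x
    have hia : i = a := by
      by_contra h
      exact absurd (hi _ (Finset.mem_insert_of_mem (hmR i))) (not_le.2 (hx i h))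
    subst hia
    exact hr i (le_antisymm (hmax y hy) (hi y (Finset.mem_insert_self _ _)))

lemma even_rooms {I V : Type*} [Fintype I] [DecidableEq I] [Fintype V] [DecidableEq V]
    (r : I → V → ℕ) (hr : ∀ i, Function.Injective (r i)) (R : Finset V)
    (hcard : R.card + 1 = Fintype.card I) (d : I → V) (t : V) (htR : t ∈ R)
    (ht : ∀ i k, k ≠ i → r i t < r i (d k)) [DecidablePred (fun x => x ∉ R ∧ Dom r (insert x R))] :
    Even (Finset.univ.filter (fun x => x ∉ R ∧ Dom r (insert x R))).card := by
  rcases Finset.eq_empty_or_nonempty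
    (Finset.univ.filter (fun x => x ∉ R ∧ Dom r (insert x R))) with h | ⟨x0, hx0⟩
  · simp [h]
  simp only [Finset.mem_filter, Finset.mem_univ, true_and] at hx0
  have hR : Dom r R := fun y => by
    obtain ⟨i, hi⟩ := hx0.2 y
    exact ⟨i, fun x hx => hi x (Finset.mem_insert_of_mem hx)⟩
  have : ∀ i, ∃ m ∈ R, ∀ x ∈ R, r i m ≤ r i x := fun i =>
    Finset.exists_min_image R (r i) ⟨t, htR⟩
  choose m hmR hm using this
  have hsurj : ∀ x ∈ R, ∃ i, m i = x := by
    intro x hx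
    obtain ⟨i, hi⟩ := hR x
    exact ⟨i, hr i (le_antisymm (hm i x hx) (hi _ (hmR i)))⟩
  obtain ⟨a, -, b, -, hab, hmab⟩ := Finset.exists_ne_map_eq_of_card_lt_of_maps_to
    (s := (Finset.univ : Finset I)) (t := R) (f := m)
    (by rw [Finset.card_univ]; omega) (fun i _ => hmR i)
  have hsa : ∀ x ∈ R, ∃ i, i ≠ a ∧ m i = x := by
    intro x hx
    obtain ⟨i, hi⟩ := hsurj x hx
    by_cases h : i = a
    · subst h; exact ⟨b, hab.symm, hmab ▸ hi⟩
    · exact ⟨i, h, hi⟩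
  have hsb : ∀ x ∈ R, ∃ i, i ≠ b ∧ m i = x := by
    intro x hx
    obtain ⟨i, hi⟩ := hsurj x hx
    by_cases h : i = b
    · subst h; exact ⟨a, hab, hmab ▸ hi⟩
    · exact ⟨i, h, hi⟩
  have hinj : ∀ e, (∀ x ∈ R, ∃ i, i ≠ e ∧ m i = x) → 
      ∀ i k, i ≠ e → k ≠ e → m i = m k → i = k := by
    intro e he i k hi hk hik
    have him : (Finset.univ.erase e).image m = R := by
      ext x
      simp only [Finset.mem_image, Finset.mem_erase, Finset.mem_univ, and_true]
      constructor
      · rintro ⟨i, -, rfl⟩; exact hmR i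
      · exact he x
    have : Set.InjOn m (Finset.univ.erase e : Finset I) := by
      apply Finset.card_image_iff.1
      rw [him, Finset.card_erase_of_mem (Finset.mem_univ _), Finset.card_univ]; omega
    exact this (by simpa using hi) (by simpa using hk) hik
  have hz : ∀ e, ∀ i, i ≠ e → r i (m i) < r i (d e) := fun e i hi =>
    (hm i t htR).trans_lt (ht i e hi.symm)
  obtain ⟨xa, hxaR, hxaD, hxa, hua⟩ := half_door r hr R m hm hmR hR a hsa (d a) (hz a)
  obtain ⟨xb, hxbR, hxbD, hxb, hub⟩ := half_door r hr R m hm hmR hR b hsb (d b) (hz b)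
  have hne : xa ≠ xb := by
    rintro rfl
    obtain ⟨i, hi⟩ := hR xa
    by_cases h : i = a
    · have := hxb i (h ▸ hab)
      exact absurd (hi _ (hmR i)) (not_le.2 this)
    · exact absurd (hi _ (hmR i)) (not_le.2 (hxa i h))
  have : (Finset.univ.filter (fun x => x ∉ R ∧ Dom r (insert x R))) = {xa, xb} := by
    ext x
    simp only [Finset.mem_filter, Finset.mem_univ, true_and, Finset.mem_insert,
      Finset.mem_singleton]
    constructor
    · rintro ⟨hxR, hxD⟩
      have key : ∀ k, ∃ i, m i = m k ∧ r i (m i) < r i x := by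
        intro k
        obtain ⟨i, hi⟩ := hxD (m k)
        have h1 : m i = m k := hr i (le_antisymm (hm i _ (hmR k))
          (hi _ (Finset.mem_insert_of_mem (hmR i))))
        refine ⟨i, h1, lt_of_le_of_ne (h1 ▸ hi _ (Finset.mem_insert_self _ _)) ?_⟩
        intro h
        exact hxR (hr i h ▸ hmR i)
      have key2 : ∀ k, k ≠ a → k ≠ b → r k (m k) < r k x := by
        intro k hka hkb
        obtain ⟨i, hi, hlt⟩ := key k
        have : i = k := by
          by_cases h : i = a
          · exact hinj b hsb i k (h ▸ hab) hkb hi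
          · exact hinj a hsa i k h hka hi
        exact this ▸ hlt
      obtain ⟨i, hi, hlt⟩ := key a
      by_cases h : i = a
      · right
        apply hub x _ hxD
        intro k hk
        by_cases hka : k = a
        · rw [hka, ← h]; exact hlt
        · exact key2 k hka hk
      · left
        have hib : i = b := hinj a hsa i b h hab.symm (hi.trans hmab)
        apply hua x _ hxD
        intro k hk
        by_cases hkb : k = b
        · rw [hkb, ← hib]; exact hlt
        · exact key2 k hk hkb
    · rintro (rfl | rfl)
      · exact ⟨hxaR, hxaD⟩
      · exact ⟨hxbR, hxbD⟩
  rw [this, Finset.card_pair hne]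
  exact even_two

lemma one_room {I V : Type*} [Fintype I] [DecidableEq I] [Fintype V] [DecidableEq V]
    (r : I → V → ℕ) (hr : ∀ i, Function.Injective (r i)) (d : I → V)
    (hd1 : ∀ i v, r i (d i) ≤ r i v)
    (hd2 : ∀ i k v, k ≠ i → v ∉ Set.range d → r i v < r i (d k)) (t : V)
    (ht : t ∉ Set.range d) (i0 : I) (R : Finset V) (hR : R = (Finset.univ.erase i0).image d)
    [DecidablePred (fun x => x ∉ R ∧ Dom r (insert x R))] :
    (Finset.univ.filter (fun x => x ∉ R ∧ Dom r (insert x R))).card = 1 := by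
  classical
  rw [Finset.card_eq_one]
  obtain ⟨y, hy, hmax⟩ := Finset.exists_max_image
    (Finset.univ.filter (fun v => v ∉ Set.range d)) (r i0) ⟨t, by simpa using ht⟩
  simp only [Finset.mem_filter, Finset.mem_univ, true_and] at hy hmax
  have hnd : ∀ v, v ∉ Set.range d → ∀ i, ¬ r i v ≤ r i (d i) := by
    intro v hv i h
    exact hv ⟨i, hr i (le_antisymm (hd1 i v) h)⟩
  have hmem : ∀ i, i ≠ i0 → d i ∈ R := by
    intro i hi
    rw [hR]
    exact Finset.mem_image_of_mem _ (by simpa using hi)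
  refine ⟨y, ?_⟩
  ext x
  simp only [Finset.mem_filter, Finset.mem_univ, true_and, Finset.mem_singleton]
  constructor
  · rintro ⟨hxR, hxD⟩
    have hx : x ∉ Set.range d := by
      rintro ⟨k, rfl⟩
      have hk : k = i0 := by
        by_contra h
        exact hxR (hmem k h)
      obtain ⟨i, hi⟩ := hxD t
      apply hnd t ht i
      apply hi
      by_cases h : i = i0
      · rw [h, hk]; exact Finset.mem_insert_self _ _
      · exact Finset.mem_insert_of_mem (hmem i h)
    obtain ⟨i, hi⟩ := hxD y
    have hi0 : i = i0 := by
      by_contra h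
      exact hnd y hy i (hi _ (Finset.mem_insert_of_mem (hmem i h)))
    subst hi0
    exact hr i (le_antisymm (hmax x hx) (hi x (Finset.mem_insert_self _ _)))
  · rintro rfl
    refine ⟨?_, ?_⟩
    · rw [hR]
      intro h
      obtain ⟨k, -, hk⟩ := Finset.mem_image.1 h
      exact hy ⟨k, hk⟩
    · intro v
      by_cases hv : v ∈ Set.range d
      · obtain ⟨k, rfl⟩ := hv
        exact ⟨k, fun x _ => hd1 k x⟩
      · refine ⟨i0, ?_⟩
        intro u hu
        rcases Finset.mem_insert.1 hu with rfl | hu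
        · exact hmax v hv
        · rw [hR] at hu
          obtain ⟨k, hk, rfl⟩ := Finset.mem_image.1 hu
          exact (hd2 i0 k v (Finset.mem_erase.1 hk).1 hv).le

/-- Scarf's combinatorial lemma. -/
theorem scarf {I V : Type*} [Fintype I] [Nonempty I] [DecidableEq I] [Fintype V] [DecidableEq V]
    (r : I → V → ℕ) (hr : ∀ i, Function.Injective (r i)) (d : I → V)
    (hd1 : ∀ i v, r i (d i) ≤ r i v)
    (hd2 : ∀ i k v, k ≠ i → v ∉ Set.range d → r i v < r i (d k)) (t : V)
    (ht : t ∉ Set.range d) (c : V → I) (hc : ∀ i, c (d i) = i) :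
    ∃ S : Finset V, S.card = Fintype.card I ∧ Dom r S ∧ S.image c = Finset.univ := by
  classical
  by_contra hcon
  push Not at hcon
  obtain ⟨i0⟩ := ‹Nonempty I›
  let door : Finset V → Prop := fun R =>
    R.card + 1 = Fintype.card I ∧ R.image c = Finset.univ.erase i0
  let room : Finset V → Prop := fun S => S.card = Fintype.card I ∧ Dom r S
  let A := (Finset.univ : Finset (V × Finset V)).filter
    (fun p => p.1 ∈ p.2 ∧ room p.2 ∧ door (p.2.erase p.1))
  let B := (Finset.univ : Finset (V × Finset V)).filter
    (fun p => p.1 ∉ p.2 ∧ door p.2 ∧ room (insert p.1 p.2))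
  have hAB : A.card = B.card := by
    apply Finset.card_nbij' (fun p => (p.1, p.2.erase p.1)) (fun p => (p.1, insert p.1 p.2))
    · rintro ⟨x, S⟩ h
      simp only [A, B, Finset.coe_filter, Finset.mem_univ, true_and, Set.mem_ofPred_eq] at h ⊢
      refine ⟨by simp, h.2.2, ?_⟩
      rw [Finset.insert_erase h.1]; exact h.2.1
    · rintro ⟨x, S⟩ h
      simp only [A, B, Finset.coe_filter, Finset.mem_univ, true_and, Set.mem_ofPred_eq] at h ⊢
      refine ⟨by simp, h.2.2, ?_⟩
      rw [Finset.erase_insert h.1]; exact h.2.1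
    · rintro ⟨x, S⟩ h
      simp only [A, Finset.coe_filter, Finset.mem_univ, true_and, Set.mem_ofPred_eq] at h
      simp [Finset.insert_erase h.1]
    · rintro ⟨x, S⟩ h
      simp only [B, Finset.coe_filter, Finset.mem_univ, true_and, Set.mem_ofPred_eq] at h
      simp [Finset.erase_insert h.1]
  have hA : Even A.card := by
    have : A.card = ∑ S : Finset V, (Finset.univ.filter
        (fun x => x ∈ S ∧ room S ∧ door (S.erase x))).card := by
      simp only [A, Finset.card_filter]
      rw [Fintype.sum_prod_type_right]
    rw [this]
    apply Finset.even_sum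
    intro S _
    by_cases hS : room S
    · have h2 := even_doors c i0 S hS.1 (hcon S hS.1 hS.2)
      refine (congrArg (fun s : Finset V => Even s.card) ?_).mpr h2
      ext x
      simp only [Finset.mem_filter, Finset.mem_univ, true_and, door, hS]
      constructor
      · rintro ⟨h1, h3, h4⟩; exact ⟨h1, h4⟩
      · rintro ⟨h1, h4⟩
        refine ⟨h1, ?_, h4⟩
        rw [Finset.card_erase_add_one h1, hS.1]
    · simp [hS]
  have hB : Odd B.card := by
    have : B.card = ∑ R : Finset V, (Finset.univ.filter
        (fun x => x ∉ R ∧ door R ∧ room (insert x R))).card := by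
      simp only [B, Finset.card_filter]
      rw [Fintype.sum_prod_type_right]
    rw [this, ← Finset.add_sum_erase _ _ (Finset.mem_univ ((Finset.univ.erase i0).image d))]
    have hred : ∀ R, door R → Finset.univ.filter (fun x => x ∉ R ∧ door R ∧ room (insert x R)) =
        Finset.univ.filter (fun x => x ∉ R ∧ Dom r (insert x R)) := by
      intro R hR
      ext x
      simp only [Finset.mem_filter, Finset.mem_univ, true_and, hR, room]
      constructor
      · rintro ⟨h1, h2, h3⟩; exact ⟨h1, h3⟩
      · rintro ⟨h1, h3⟩
        exact ⟨h1, by rw [Finset.card_insert_of_notMem h1]; exact hR.1, h3⟩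
    have hdinj : Function.Injective d := fun i j h => by rw [← hc i, ← hc j, h]
    apply Odd.add_even
    · rw [hred, one_room r hr d hd1 hd2 t ht i0 _ rfl]
      · exact odd_one
      · refine ⟨?_, ?_⟩
        · rw [Finset.card_image_of_injective _ hdinj, Finset.card_erase_add_one (Finset.mem_univ _),
            Finset.card_univ]
        · rw [Finset.image_image]
          have : c ∘ d = id := funext hc
          rw [this, Finset.image_id]
    · apply Finset.even_sum
      intro R hR
      have hR1 := (Finset.mem_erase.1 hR).1
      by_cases hdo : door R
      · rw [hred R hdo]
        have : ∃ u ∈ R, u ∉ Set.range d := by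
          by_contra hall
          push Not at hall
          apply hR1
          apply Finset.eq_of_subset_of_card_le
          · intro u hu
            obtain ⟨k, rfl⟩ := hall u hu
            apply Finset.mem_image_of_mem
            rw [← hdo.2]
            exact Finset.mem_image.2 ⟨d k, hu, hc k⟩
          · rw [Finset.card_image_of_injective _ hdinj, ← hdo.2]
            exact Finset.card_image_le
        obtain ⟨u, huR, hu⟩ := this
        exact even_rooms r hr R hdo.1 d u huR (fun i k hk => hd2 i k u hk hu)
      · simp [hdo]
  rw [hAB] at hA
  exact (Nat.not_even_iff_odd.2 hB) hA


/-- Points of the simplex with denominators `N`. -/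
abbrev Grid (I : Type*) [Fintype I] (N : ℕ) : Type _ :=
  {x : I → Fin (N + 1) // ∑ i, (x i : ℕ) = N}

lemma grid_mk {I : Type*} [Fintype I] (N : ℕ) (y : I → ℕ) (hy : ∑ i, y i = N) :
    ∃ x : Grid I N, ∀ i, (x.1 i : ℕ) = y i := by
  have h : ∀ i, y i < N + 1 := fun i => by
    have := Finset.single_le_sum (f := y) (fun i _ => Nat.zero_le _) (Finset.mem_univ i)
    omega
  exact ⟨⟨fun i => ⟨y i, h i⟩, by simpa using hy⟩, fun i => rfl⟩

lemma grid_scarf {I : Type*} [Fintype I] [Nonempty I] [DecidableEq I] (N : ℕ)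
    (c : Grid I N → I) :
    ∃ (σ : Finset (Grid I N)) (C : Finset I), σ.Nonempty ∧ (∀ i ∈ C, ∃ x ∈ σ, c x = i) ∧
      ∀ y : Grid I N, ∃ i ∈ C, ∀ x ∈ σ, (y.1 i : ℕ) ≤ x.1 i := by
  classical
  let T := Grid I N
  let M := Fintype.card T
  let idx : T ≃ Fin M := Fintype.equivFin T
  let jdx : I ≃ Fin (Fintype.card I) := Fintype.equivFin I
  let r : I → T ⊕ I → ℕ := fun i v => Sum.elim (fun t : T => (t.1 i : ℕ) * M + idx t + 1)
    (fun k => if k = i then 0 else N * M + M + 1 + jdx k) v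
  have hlt : ∀ i (t : T), r i (Sum.inl t) < N * M + M + 1 := by
    intro i t
    have h1 : (t.1 i : ℕ) ≤ N := by have := (t.1 i).2; omega
    have h2 := Nat.mul_le_mul_right M h1
    have h3 := (idx t).2
    simp only [r, Sum.elim_inl]; omega
  have hpos : ∀ i (t : T), 0 < r i (Sum.inl t) := by
    intro i t; simp [r]
  have hmod : ∀ i (t s : T), r i (Sum.inl t) = r i (Sum.inl s) → t = s := by
    intro i t s h
    have h' : (t.1 i : ℕ) * M + idx t = (s.1 i : ℕ) * M + idx s := by
      simpa [r] using h
    have h2 := congrArg (· % M) h'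
    simp only [Nat.mul_add_mod_self_right, Nat.mod_eq_of_lt (idx t).2,
      Nat.mod_eq_of_lt (idx s).2] at h2
    exact idx.injective (Fin.ext h2)
  have hr : ∀ i, Function.Injective (r i) := by
    rintro i (t | k) (s | l) h
    · rw [hmod i t s h]
    · exfalso
      have h1 := hlt i t; have h2 := hpos i t
      by_cases hl : l = i <;> simp only [r, Sum.elim_inr, hl, if_true, if_false] at h h1 h2 <;> omega
    · exfalso
      have h1 := hlt i s; have h2 := hpos i s
      by_cases hl : k = i <;> simp only [r, Sum.elim_inr, hl, if_true, if_false] at h h1 h2 <;> omega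
    · congr 1
      by_cases hl : l = i <;> by_cases hk : k = i <;>
        simp only [r, Sum.elim_inr, hl, hk, if_true, if_false] at h
      · rw [hl, hk]
      · omega
      · omega
      · exact jdx.injective (Fin.ext (by omega))
  have hnr : ∀ t : T, (Sum.inl t : T ⊕ I) ∉ Set.range (Sum.inr : I → T ⊕ I) := by
    rintro t ⟨k, hk⟩; cases hk
  obtain ⟨i1⟩ := ‹Nonempty I›
  obtain ⟨t0, -⟩ := grid_mk (I := I) N (fun i => if i = i1 then N else 0) (by simp)
  have : Nonempty I := ⟨i1⟩
  obtain ⟨S, hcard, hD, him⟩ := scarf r hr Sum.inr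
    (by intro i v; simp [r])
    (by
      rintro i k (t | l) hk hv
      · have := hlt i t
        simp only [r, Sum.elim_inr, hk, if_false] at this ⊢
        omega
      · exact absurd ⟨l, rfl⟩ hv) (Sum.inl t0) (hnr t0) (Sum.elim c id) (fun i => rfl)
  let σ : Finset T := Finset.univ.filter (fun t => (Sum.inl t : T ⊕ I) ∈ S)
  let C : Finset I := Finset.univ.filter (fun i => (Sum.inr i : T ⊕ I) ∉ S)
  have hcol : ∀ i ∈ C, ∃ x ∈ σ, c x = i := by
    intro i hi
    have : i ∈ S.image (Sum.elim c id) := by rw [him]; simp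
    obtain ⟨s, hs, hsi⟩ := Finset.mem_image.1 this
    rcases s with t | k
    · exact ⟨t, by simpa [σ] using hs, hsi⟩
    · simp only [Sum.elim_inr, id] at hsi
      subst hsi
      simp [C, hs] at hi
  have hdom : ∀ y : T, ∃ i ∈ C, ∀ x ∈ σ, (y.1 i : ℕ) ≤ x.1 i := by
    intro y
    obtain ⟨i, hi⟩ := hD (Sum.inl y)
    refine ⟨i, ?_, ?_⟩
    · simp only [C, Finset.mem_filter, Finset.mem_univ, true_and]
      intro h
      have h1 := hi _ h
      have h2 := hpos i y
      simp only [r, Sum.elim_inr, if_true] at h1 h2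
      omega
    · intro x hx
      have h1 := hi (Sum.inl x) (by simpa [σ] using hx)
      by_contra hcon
      push Not at hcon
      have h2 : ((x.1 i : ℕ) + 1) * M ≤ (y.1 i : ℕ) * M := Nat.mul_le_mul_right M hcon
      have h3 := (idx x).2
      simp only [r, Sum.elim_inl] at h1
      rw [add_mul] at h2
      omega
  refine ⟨σ, C, ?_, hcol, hdom⟩
  obtain ⟨i, hi, -⟩ := hdom t0
  obtain ⟨x, hx, -⟩ := hcol i hi
  exact ⟨x, hx⟩

lemma grid_small {I : Type*} [Fintype I] [DecidableEq I] (N : ℕ)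
    (σ : Finset (Grid I N)) (C : Finset I) (hσ : σ.Nonempty)
    (hdom : ∀ y : Grid I N, ∃ i ∈ C, ∀ x ∈ σ, (y.1 i : ℕ) ≤ x.1 i) :
    (∀ x ∈ σ, ∀ i, i ∉ C → (x.1 i : ℕ) ≤ Fintype.card I) ∧
    (∀ x ∈ σ, ∀ x' ∈ σ, ∀ i, (x.1 i : ℕ) ≤ x'.1 i + Fintype.card I) := by
  have hm : ∀ i, ∃ m ∈ σ, ∀ x ∈ σ, (m.1 i : ℕ) ≤ x.1 i := fun i =>
    Finset.exists_min_image σ (fun x => (x.1 i : ℕ)) hσ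
  choose μ hμ hmin using hm
  have hsum : N < ∑ i ∈ C, ((μ i).1 i + 1 : ℕ) := by
    by_contra hcon
    push Not at hcon
    obtain ⟨x0, hx0⟩ := hσ
    obtain ⟨i1, hi1, -⟩ := hdom x0
    let y : I → ℕ := fun i => (if i ∈ C then ((μ i).1 i + 1 : ℕ) else 0) +
      (if i = i1 then N - ∑ i ∈ C, ((μ i).1 i + 1 : ℕ) else 0)
    obtain ⟨x, hx⟩ := grid_mk N y (by
      simp only [y, Finset.sum_add_distrib, Finset.sum_ite_mem, Finset.univ_inter,
        Finset.sum_ite_eq', Finset.mem_univ, if_true] at hcon ⊢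
      omega)
    obtain ⟨i, hi, hle⟩ := hdom x
    have h1 := hle _ (hμ i)
    rw [hx i] at h1
    simp only [y, hi, if_true] at h1
    omega
  have hsum2 : N < ∑ i ∈ C, ((μ i).1 i : ℕ) + Fintype.card I := by
    rw [Finset.sum_add_distrib] at hsum
    have := Finset.card_le_univ C
    simp at hsum
    omega
  have hC : ∀ x ∈ σ, ∑ i ∈ C, ((μ i).1 i : ℕ) ≤ ∑ i ∈ C, (x.1 i : ℕ) := fun x hx =>
    Finset.sum_le_sum fun i _ => hmin i x hx
  have hN : ∀ x : Grid I N, ∑ i ∈ C, (x.1 i : ℕ) + ∑ i ∈ Cᶜ, (x.1 i : ℕ) = N := fun x => by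
    rw [Finset.sum_add_sum_compl]; exact x.2
  have hout : ∀ x ∈ σ, ∀ i, i ∉ C → (x.1 i : ℕ) ≤ Fintype.card I := by
    intro x hx i hi
    have h1 := hC x hx
    have h2 := hN x
    have h3 := Finset.single_le_sum (f := fun i => (x.1 i : ℕ)) (fun i _ => Nat.zero_le _)
      (Finset.mem_compl.2 hi)
    omega
  refine ⟨hout, ?_⟩
  intro x hx x' hx' i
  by_cases hi : i ∈ C
  · have h2 := hN x
    have h3 := hmin i x' hx'
    have h4 := Finset.add_sum_erase C (fun i => (x.1 i : ℕ)) hi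
    have h5 := Finset.add_sum_erase C (fun i => ((μ i).1 i : ℕ)) hi
    have h6 : ∑ i ∈ C.erase i, ((μ i).1 i : ℕ) ≤ ∑ i ∈ C.erase i, (x.1 i : ℕ) :=
      Finset.sum_le_sum fun i _ => hmin i x hx
    omega
  · have := hout x hx i hi
    omega

/-- Dual form of the KKM covering theorem. -/
theorem kkm {I : Type*} [Fintype I] [Nonempty I] [DecidableEq I] (B : I → Set (I → ℝ))
    (hB : ∀ i, IsClosed (B i)) (hcov : ∀ x ∈ stdSimplex ℝ I, ∃ i, x ∈ B i) :
    ∃ z ∈ stdSimplex ℝ I, ∀ i, z i = 0 ∨ z ∈ B i := by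
  by_contra hcon
  push Not at hcon
  obtain ⟨δ, hδ, hleb⟩ := lebesgue_number_lemma_of_metric (isCompact_stdSimplex ℝ I)
    (c := fun i => {z : I → ℝ | z i ≠ 0} ∩ (B i)ᶜ)
    (fun i => (isOpen_ne_fun (continuous_apply i) continuous_const).inter (hB i).isOpen_compl)
    (by
      intro z hz
      obtain ⟨i, h1, h2⟩ := hcon z hz
      exact Set.mem_iUnion.2 ⟨i, h1, h2⟩)
  obtain ⟨N, hN⟩ := exists_nat_gt ((Fintype.card I : ℝ) / δ)
  have hN0 : (0 : ℝ) < N := lt_of_le_of_lt (by positivity) hN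
  have hnN : (Fintype.card I : ℝ) / N < δ := by
    rw [div_lt_iff₀ hδ] at hN
    rw [div_lt_iff₀ hN0]; linarith
  let p : Grid I N → I → ℝ := fun x i => (x.1 i : ℕ) / (N : ℝ)
  have hp : ∀ x, p x ∈ stdSimplex ℝ I := by
    intro x
    refine ⟨fun i => by positivity, ?_⟩
    simp only [p]
    rw [← Finset.sum_div, div_eq_one_iff_eq hN0.ne']
    exact_mod_cast x.2
  choose c hc using fun x => hcov (p x) (hp x)
  obtain ⟨σ, C, hσ, hcol, hdom⟩ := grid_scarf N c
  obtain ⟨hout, hclose⟩ := grid_small N σ C hσ hdom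
  obtain ⟨x, hx⟩ := hσ
  obtain ⟨i, hi⟩ := hleb (p x) (hp x)
  by_cases hiC : i ∈ C
  · obtain ⟨x', hx', hci⟩ := hcol i hiC
    have : p x' ∈ Metric.ball (p x) δ := by
      rw [Metric.mem_ball]
      refine lt_of_le_of_lt ?_ hnN
      rw [dist_pi_le_iff (by positivity)]
      intro j
      have h1 : ((x.1 j : ℕ) : ℝ) ≤ (x'.1 j : ℕ) + Fintype.card I := by
        exact_mod_cast hclose x hx x' hx' j
      have h2 : ((x'.1 j : ℕ) : ℝ) ≤ (x.1 j : ℕ) + Fintype.card I := by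
        exact_mod_cast hclose x' hx' x hx j
      simp only [p]
      rw [Real.dist_eq, ← sub_div, abs_div, abs_of_pos hN0]
      gcongr
      rw [abs_le]; constructor <;> linarith
    exact (hi this).2 (hci ▸ hc x')
  · have : Function.update (p x) i 0 ∈ Metric.ball (p x) δ := by
      rw [Metric.mem_ball]
      refine lt_of_le_of_lt ?_ hnN
      rw [dist_pi_le_iff (by positivity)]
      intro j
      by_cases hj : j = i
      · subst hj
        have h1 : ((x.1 j : ℕ) : ℝ) ≤ Fintype.card I := by exact_mod_cast hout x hx j hiC
        simp only [Function.update_self, p]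
        rw [Real.dist_eq, zero_sub, abs_neg, abs_div, abs_of_pos hN0, abs_of_nonneg (by positivity)]
        gcongr
      · rw [Function.update_of_ne hj, dist_self]; positivity
    exact (hi this).1 (by simp)



lemma frac_aux (k d : ℕ) (hk : 1 ≤ k) (hkd : k ≤ d) (w : ℝ) (hw : 1 ≤ w * k) :
    (k : ℝ) - (k - 1) * w ≤ d - 1 + 1 / d := by
  have hk' : (1 : ℝ) ≤ k := by exact_mod_cast hk
  have hkd' : (k : ℝ) ≤ d := by exact_mod_cast hkd
  have h1 : (1 : ℝ) / k ≤ w := by rw [div_le_iff₀ (by linarith)]; exact hw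
  have h2 : (k : ℝ) - (k - 1) * w ≤ k - (k - 1) * (1 / k) := by
    have := mul_le_mul_of_nonneg_left h1 (by linarith : (0 : ℝ) ≤ k - 1)
    linarith
  refine h2.trans ?_
  have h3 : (k : ℝ) - (k - 1) * (1 / k) = k - 1 + 1 / k := by field_simp; ring
  rw [h3]
  have h4 : (d : ℝ) - 1 + 1 / d - (k - 1 + 1 / k) = (d - k) * (d * k - 1) / (d * k) := by
    have : (k : ℝ) ≠ 0 := by linarith
    have : (d : ℝ) ≠ 0 := by linarith
    field_simp; ring
  have h5 : 0 ≤ ((d : ℝ) - k) * (d * k - 1) / (d * k) := by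
    apply div_nonneg
    · apply mul_nonneg (by linarith); nlinarith
    · nlinarith
  linarith

/-- Extreme optimal fractional matchings: either some edge of `S` has weight zero, or
there are at least as many tight vertices as edges. -/
lemma exists_extreme {E V : Type*} [Fintype E] [DecidableEq E] [Fintype V] [DecidableEq V]
    (T : E → Finset V) (hT : ∀ e, (T e).Nonempty) (S : Finset E) (w0 : E → ℝ)
    (h0 : ∀ e, 0 ≤ w0 e) (hS0 : ∀ e, e ∉ S → w0 e = 0)
    (hv0 : ∀ v, ∑ e with v ∈ T e, w0 e ≤ 1) :
    ∃ w : E → ℝ, (∀ e, 0 ≤ w e) ∧ (∀ e, e ∉ S → w e = 0) ∧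
      (∀ v, ∑ e with v ∈ T e, w e ≤ 1) ∧ ∑ e, w0 e ≤ ∑ e, w e ∧
      ((∃ e ∈ S, w e = 0) ∨
        S.card ≤ (Finset.univ.filter (fun v => ∑ e with v ∈ T e, w e = 1)).card) := by
  let K : Set (E → ℝ) := {w | (∀ e, 0 ≤ w e) ∧ (∀ e, e ∉ S → w e = 0) ∧
      (∀ v, ∑ e with v ∈ T e, w e ≤ 1)}
  have hKsub : K ⊆ Set.Icc 0 1 := by
    rintro w ⟨h1, h2, h3⟩
    refine ⟨h1, fun e => ?_⟩
    obtain ⟨v, hv⟩ := hT e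
    refine le_trans ?_ (h3 v)
    exact Finset.single_le_sum (f := w) (fun e _ => h1 e) (by simpa using hv)
  have hKclosed : IsClosed K := by
    have e1 : IsClosed {w : E → ℝ | ∀ e, 0 ≤ w e} := by
      simp only [Set.ofPred_forall]
      exact isClosed_iInter fun e => isClosed_le continuous_const (continuous_apply e)
    have e2 : IsClosed {w : E → ℝ | ∀ e, e ∉ S → w e = 0} := by
      simp only [Set.ofPred_forall]
      exact isClosed_iInter fun e => isClosed_iInter fun _ =>
        isClosed_eq (continuous_apply e) continuous_const
    have e3 : IsClosed {w : E → ℝ | ∀ v, ∑ e with v ∈ T e, w e ≤ 1} := by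
      simp only [Set.ofPred_forall]
      exact isClosed_iInter fun v => isClosed_le (by fun_prop) continuous_const
    exact e1.inter (e2.inter e3)
  have hKc : IsCompact K := isCompact_Icc.of_isClosed_subset hKclosed hKsub
  have hsumc : Continuous (fun w : E → ℝ => ∑ e, w e) := by fun_prop
  obtain ⟨w1, hw1, hmax⟩ := hKc.exists_isMaxOn ⟨w0, h0, hS0, hv0⟩ hsumc.continuousOn
  let K2 : Set (E → ℝ) := K ∩ {w | ∑ e, w e = ∑ e, w1 e}
  have hK2c : IsCompact K2 := hKc.inter_right (isClosed_eq hsumc continuous_const)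
  obtain ⟨w, hw⟩ := hK2c.extremePoints_nonempty (⟨w1, hw1, rfl⟩ : K2.Nonempty)
  rw [mem_extremePoints] at hw
  obtain ⟨⟨hwK, hwsum⟩, hext⟩ := hw
  have hmaxw : ∀ u ∈ K, ∑ e, u e ≤ ∑ e, w e := fun u hu => by
    have h : ∑ e, w e = ∑ e, w1 e := hwsum
    rw [h]; exact hmax hu
  refine ⟨w, hwK.1, hwK.2.1, hwK.2.2, hmaxw w0 ⟨h0, hS0, hv0⟩, ?_⟩
  by_contra hcon
  push Not at hcon
  obtain ⟨hpos, hlt⟩ := hcon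
  let t := Finset.univ.filter (fun v => ∑ e with v ∈ T e, w e = 1)
  -- the incidence map
  let ext : (S → ℝ) →ₗ[ℝ] (E → ℝ) :=
    { toFun := fun z e => if h : e ∈ S then z ⟨e, h⟩ else 0
      map_add' := by intro x y; ext e; by_cases h : e ∈ S <;> simp [h]
      map_smul' := by intro a x; ext e; by_cases h : e ∈ S <;> simp [h] }
  let inc : (E → ℝ) →ₗ[ℝ] (t → ℝ) :=
    { toFun := fun z v => ∑ e with v.1 ∈ T e, z e
      map_add' := by intro x y; ext v; simp [Finset.sum_add_distrib]
      map_smul' := by intro a x; ext v; simp [Finset.mul_sum] }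
  have hker : LinearMap.ker (inc ∘ₗ ext) ≠ ⊥ := by
    apply LinearMap.ker_ne_bot_of_finrank_lt
    rw [Module.finrank_fintype_fun_eq_card, Module.finrank_fintype_fun_eq_card,
      Fintype.card_coe, Fintype.card_coe]
    exact hlt
  obtain ⟨z0, hz0, hz0ne⟩ := Submodule.exists_mem_ne_zero_of_ne_bot hker
  let z := ext z0
  have hzS : ∀ e, e ∉ S → z e = 0 := fun e he => by simp [z, ext, he]
  have hzne : z ≠ 0 := by
    intro h
    apply hz0ne
    ext e
    have := congrFun h e.1
    simpa [z, ext] using this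
  have hzt : ∀ v, ∑ e with v ∈ T e, w e = 1 → ∑ e with v ∈ T e, z e = 0 := by
    intro v hv
    have := congrFun (LinearMap.mem_ker.1 hz0) ⟨v, by simpa [t] using hv⟩
    simpa [inc, z] using this
  have hev : ∀ᶠ s in nhds (0 : ℝ), (fun e => w e + s * z e) ∈ K := by
    have a1 : ∀ᶠ s in nhds (0 : ℝ), ∀ e, 0 ≤ w e + s * z e := by
      rw [Filter.eventually_all]
      intro e
      by_cases he : e ∈ S
      · have hp : 0 < w e := lt_of_le_of_ne (hwK.1 e) (hpos e he).symm
        have hc : Continuous (fun s : ℝ => w e + s * z e) := by fun_prop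
        have h2 : ∀ᶠ s in nhds (0 : ℝ), 0 < w e + s * z e :=
          continuousAt_const.eventually_lt hc.continuousAt (by simpa using hp)
        exact h2.mono fun s hs => hs.le
      · exact Filter.Eventually.of_forall fun s => by simp [hzS e he, hwK.1 e]
    have a3 : ∀ᶠ s in nhds (0 : ℝ), ∀ v, ∑ e with v ∈ T e, (w e + s * z e) ≤ 1 := by
      rw [Filter.eventually_all]
      intro v
      have hc : Continuous (fun s : ℝ => ∑ e with v ∈ T e, (w e + s * z e)) := by fun_prop
      by_cases hv : ∑ e with v ∈ T e, w e = 1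
      · refine Filter.Eventually.of_forall fun s => ?_
        rw [Finset.sum_add_distrib, ← Finset.mul_sum, hzt v hv, hv]; simp
      · have hp : ∑ e with v ∈ T e, w e < 1 := lt_of_le_of_ne (hwK.2.2 v) hv
        have h2 : ∀ᶠ s in nhds (0 : ℝ), ∑ e with v ∈ T e, (w e + s * z e) < 1 :=
          hc.continuousAt.eventually_lt continuousAt_const (by simpa using hp)
        exact h2.mono fun s hs => hs.le
    filter_upwards [a1, a3] with s h1 h3
    exact ⟨h1, fun e he => by simp [hzS e he, hwK.2.1 e he], h3⟩
  obtain ⟨ε, hε, hball⟩ := Metric.eventually_nhds_iff.1 hev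
  have hp : (fun e => w e + (ε / 2) * z e) ∈ K := hball (by
    rw [Real.dist_eq, sub_zero, abs_of_pos (by linarith)]; linarith)
  have hm : (fun e => w e + (-(ε / 2)) * z e) ∈ K := hball (by
    rw [Real.dist_eq, sub_zero, abs_neg, abs_of_pos (by linarith)]; linarith)
  have hsz : ∑ e, z e = 0 := by
    have i1 := hmaxw _ hp
    have i2 := hmaxw _ hm
    simp only [Finset.sum_add_distrib, ← Finset.mul_sum] at i1 i2
    nlinarith
  have hp2 : (fun e => w e + (ε / 2) * z e) ∈ K2 := ⟨hp, by
    simp only [Set.mem_ofPred_eq, Finset.sum_add_distrib, ← Finset.mul_sum, hsz]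
    simpa using hwsum⟩
  have hm2 : (fun e => w e + (-(ε / 2)) * z e) ∈ K2 := ⟨hm, by
    simp only [Set.mem_ofPred_eq, Finset.sum_add_distrib, ← Finset.mul_sum, hsz]
    simpa using hwsum⟩
  have := hext _ hp2 _ hm2 ⟨1 / 2, 1 / 2, by norm_num, by norm_num, by norm_num, by
    ext e; simp only [Pi.add_apply, Pi.smul_apply, smul_eq_mul]; ring⟩
  apply hzne
  ext e
  have h := congrFun this.1 e
  have : (ε / 2) * z e = 0 := by linarith
  rcases mul_eq_zero.1 this with h | h
  · linarith
  · simpa using h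

/-- Weak form of Füredi's theorem. -/
theorem furedi {E V : Type*} [Fintype E] [DecidableEq E] [Fintype V] [DecidableEq V]
    (T : E → Finset V) (hT : ∀ e, (T e).Nonempty) (d : ℕ) (hd : ∀ e, (T e).card ≤ d) (n : ℕ) :
    ∀ (S : Finset E), S.card = n → ∀ (w : E → ℝ),
    (∀ e, 0 ≤ w e) → (∀ e, e ∉ S → w e = 0) →
    (∀ v, ∑ e with v ∈ T e, w e ≤ 1) →
    ∃ M ⊆ S, (∀ e ∈ M, ∀ e' ∈ M, e ≠ e' → Disjoint (T e) (T e')) ∧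
      ∑ e, w e ≤ (d - 1 + 1 / d : ℝ) * M.card := by
  induction n using Nat.strong_induction_on with
  | _ n ih =>
  intro S hSn w0 h0 hS0 hv0
  obtain ⟨w, h1, hS1, hv1, hle, hor⟩ := exists_extreme T hT S w0 h0 hS0 hv0
  rcases hor with ⟨e, heS, he⟩ | hcard
  · obtain ⟨M, hM, hMd, hMw⟩ := ih (S.erase e).card
      (by rw [← hSn]; exact Finset.card_erase_lt_of_mem heS) (S.erase e) rfl w h1
      (by
        intro e' he'
        by_cases h : e' = e
        · rw [h, he]
        · exact hS1 e' (fun h' => he' (Finset.mem_erase.2 ⟨h, h'⟩))) hv1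
    exact ⟨M, hM.trans (Finset.erase_subset _ _), hMd, hle.trans hMw⟩
  rcases S.eq_empty_or_nonempty with hSe | hSne
  · refine ⟨∅, by simp, by simp, ?_⟩
    have : ∀ e, w0 e = 0 := fun e => hS0 e (by simp [hSe])
    simp [this]
  -- double counting
  have hdc : (S.card : ℝ) ≤ ∑ e ∈ S, w e * (T e).card := by
    calc (S.card : ℝ) ≤ ((Finset.univ.filter
            (fun v => ∑ e with v ∈ T e, w e = 1)).card : ℝ) := by exact_mod_cast hcard
      _ = ∑ v with ∑ e with v ∈ T e, w e = 1, ∑ e with v ∈ T e, w e := by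
          rw [Finset.sum_congr rfl (fun v hv => (Finset.mem_filter.1 hv).2)]; simp
      _ ≤ ∑ v, ∑ e with v ∈ T e, w e := by
          apply Finset.sum_le_sum_of_subset_of_nonneg (Finset.filter_subset _ _)
          intro v _ _
          exact Finset.sum_nonneg fun e _ => h1 e
      _ = ∑ e, w e * (T e).card := by
          simp only [Finset.sum_filter]
          rw [Finset.sum_comm]
          apply Finset.sum_congr rfl
          intro e _
          rw [← Finset.sum_filter]
          simp [mul_comm]
      _ = ∑ e ∈ S, w e * (T e).card := by
          symm
          apply Finset.sum_subset (Finset.subset_univ _)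
          intro e _ he
          simp [hS1 e he]
  have : ∃ e ∈ S, 1 ≤ w e * (T e).card := by
    by_contra hcon
    push Not at hcon
    have := Finset.sum_lt_sum_of_nonempty hSne hcon
    simp at this
    linarith
  obtain ⟨e, heS, he⟩ := this
  let S' := S.filter (fun e' => Disjoint (T e) (T e'))
  have heS' : e ∉ S' := by
    intro h
    have := (Finset.mem_filter.1 h).2
    rw [disjoint_self] at this
    exact (hT e).ne_empty this
  let w' : E → ℝ := fun e' => if e' ∈ S' then w e' else 0
  have hw'le : ∀ e', w' e' ≤ w e' := by
    intro e'
    by_cases h : e' ∈ S' <;> simp [w', h, h1]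
  obtain ⟨M, hM, hMd, hMw⟩ := ih S'.card (by
      rw [← hSn]
      apply Finset.card_lt_card
      refine ⟨Finset.filter_subset _ _, fun h => heS' (h heS)⟩) S' rfl w'
    (by intro e'; by_cases h : e' ∈ S' <;> simp [w', h, h1])
    (by intro e' h; simp [w', h])
    (fun v => (Finset.sum_le_sum fun e' _ => hw'le e').trans (hv1 v))
  have heM : e ∉ M := fun h => heS' (hM h)
  refine ⟨insert e M, ?_, ?_, ?_⟩
  · intro x hx
    rcases Finset.mem_insert.1 hx with rfl | hx
    · exact heS
    · exact (Finset.mem_filter.1 (hM hx)).1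
  · intro x hx y hy hxy
    rcases Finset.mem_insert.1 hx with hx | hx <;> rcases Finset.mem_insert.1 hy with hy | hy
    · exact absurd (hx.trans hy.symm) hxy
    · rw [hx]; exact (Finset.mem_filter.1 (hM hy)).2
    · rw [hy]; exact (Finset.mem_filter.1 (hM hx)).2.symm
    · exact hMd x hx y hy hxy
  · rw [Finset.card_insert_of_notMem heM]
    push_cast
    have hkey : ∑ e', (w e' - w' e') ≤ (T e).card - ((T e).card - 1) * w e := by
      have b1 : ∑ v ∈ T e, ∑ e' with v ∈ T e', w e' ≤ (T e).card := by
        have := Finset.sum_le_sum (s := T e) (fun v _ => hv1 v)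
        simpa using this
      have b2 : ∑ v ∈ T e, ∑ e' with v ∈ T e', w e' =
          ∑ e', ((T e ∩ T e').card : ℝ) * w e' := by
        simp only [Finset.sum_filter]
        rw [Finset.sum_comm]
        apply Finset.sum_congr rfl
        intro e' _
        rw [← Finset.sum_filter, Finset.filter_mem_eq_inter]
        simp
      have b3 : ∀ e', (w e' - w' e') + (if e' = e then ((T e).card - 1) * w e else 0) ≤
          ((T e ∩ T e').card : ℝ) * w e' := by
        intro e'
        by_cases h : e' = e
        · subst h
          simp only [w', heS', if_false, if_true, Finset.inter_self]
          apply le_of_eq; ring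
        · simp only [h, if_false, add_zero]
          by_cases h' : e' ∈ S'
          · simp only [w', h', if_true, sub_self]
            exact mul_nonneg (Nat.cast_nonneg _) (h1 e')
          · simp only [w', h', if_false, sub_zero]
            by_cases hs : e' ∈ S
            · have : ¬ Disjoint (T e) (T e') := fun hdis => h' (Finset.mem_filter.2 ⟨hs, hdis⟩)
              rw [Finset.disjoint_iff_inter_eq_empty, ← Finset.card_eq_zero] at this
              have h2 : (1 : ℝ) ≤ (T e ∩ T e').card := by
                exact_mod_cast Nat.one_le_iff_ne_zero.2 this
              nlinarith [h1 e']
            · simp [hS1 e' hs]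
      have b4 := Finset.sum_le_sum (s := Finset.univ) (fun e' _ => b3 e')
      rw [Finset.sum_add_distrib, ← b2] at b4
      simp only [Finset.sum_ite_eq', Finset.mem_univ, if_true] at b4
      linarith
    have hfa := frac_aux (T e).card d (Finset.card_pos.2 (hT e)) (hd e) (w e) he
    rw [Finset.sum_sub_distrib] at hkey
    linarith


/-- The cut points determined by a point of the simplex. -/
noncomputable def cut {n : ℕ} (A B : ℝ) (x : Fin n → ℝ) (j : ℕ) : ℝ :=
  A + (B - A) * ∑ t with (t : Fin n).val < j, x t

lemma cut_zero {n : ℕ} (A B : ℝ) (x : Fin n → ℝ) : cut A B x 0 = A := by simp [cut]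

lemma cut_last {n : ℕ} (A B : ℝ) (x : Fin n → ℝ) (hx : x ∈ stdSimplex ℝ (Fin n)) :
    cut A B x n = B := by
  simp [cut, hx.2]

lemma cut_succ {n : ℕ} (A B : ℝ) (x : Fin n → ℝ) (i : Fin n) :
    cut A B x (i.val + 1) = cut A B x i.val + (B - A) * x i := by
  have : (Finset.univ.filter (fun t : Fin n => t.val < i.val + 1)) =
      insert i (Finset.univ.filter (fun t : Fin n => t.val < i.val)) := by
    ext t
    simp only [Finset.mem_filter, Finset.mem_univ, true_and, Finset.mem_insert, Fin.ext_iff]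
    omega
  rw [cut, this, Finset.sum_insert (by simp), cut]
  ring

lemma cut_mono {n : ℕ} (A B : ℝ) (hAB : A ≤ B) (x : Fin n → ℝ) (hx : ∀ i, 0 ≤ x i) :
    Monotone (cut A B x) := by
  intro j k hjk
  have : ∑ t with (t : Fin n).val < j, x t ≤ ∑ t with (t : Fin n).val < k, x t := by
    apply Finset.sum_le_sum_of_subset_of_nonneg
    · intro t ht
      simp only [Finset.mem_filter, Finset.mem_univ, true_and] at ht ⊢
      omega
    · intro t _ _; exact hx t
  have := mul_le_mul_of_nonneg_left this (sub_nonneg.2 hAB)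
  simp only [cut]; linarith

lemma cut_continuous {n : ℕ} (A B : ℝ) (j : ℕ) :
    Continuous (fun x : Fin n → ℝ => cut A B x j) := by
  unfold cut; fun_prop

/-- A point avoiding all cut points lies in exactly one cell. -/
lemma exists_cell (n : ℕ) (q : ℕ → ℝ) (a : ℝ) (h0 : q 0 < a) (hn : a < q n)
    (hne : ∀ j ≤ n, q j ≠ a) : ∃ i : Fin n, q i.val < a ∧ a < q (i.val + 1) := by
  classical
  have hex : ∃ j, a < q j := ⟨n, hn⟩
  have h1 := Nat.find_spec hex
  have h2 : Nat.find hex ≤ n := Nat.find_min' hex hn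
  have h3 : Nat.find hex ≠ 0 := fun h => by rw [h] at h1; linarith
  obtain ⟨k, hk⟩ := Nat.exists_eq_succ_of_ne_zero h3
  have h4 : ¬ a < q k := Nat.find_min hex (by omega)
  rw [hk] at h1 h2
  exact ⟨⟨k, by omega⟩, lt_of_le_of_ne (not_lt.1 h4) (hne k (by omega)), h1⟩

lemma cell_unique (q : ℕ → ℝ) (hq : Monotone q) (a : ℝ) (i k : ℕ) (hi : q i < a ∧ a < q (i + 1))
    (hk : q k < a ∧ a < q (k + 1)) : i = k := by
  rcases lt_trichotomy i k with h | h | h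
  · have := hq (show i + 1 ≤ k from h)
    linarith [hi.2, hk.1]
  · exact h
  · have := hq (show k + 1 ≤ i from h)
    linarith [hi.1, hk.2]

theorem core (d n : ℕ) (hd : 1 ≤ d) (hn : 0 < n) {E : Type*} [Fintype E] [DecidableEq E]
    (s : E → Set ℝ) (L : E → Finset ℝ) (hL : ∀ e, (L e).card ≤ d)
    (hLs : ∀ e, ∀ a ∈ L e, a ∈ s e)
    (hseg : ∀ e, ∀ y ∈ s e, ∃ a ∈ L e, a ≤ y ∧ Set.Icc a y ⊆ s e)
    (hne : ∀ e, (s e).Nonempty) (hcl : ∀ e, IsClosed (s e)) (A B : ℝ)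
    (hs : ∀ e, s e ⊆ Set.Ioo A B)
    (hcov : ∀ C : Finset ℝ, C.card < n → ∃ e, ∀ x ∈ C, x ∉ s e) :
    ∃ M : Finset E, (∀ e ∈ M, ∀ e' ∈ M, e ≠ e' → Disjoint (s e) (s e')) ∧
      n ≤ (d ^ 2 - d + 1) * M.card := by
  classical
  have hAB : A < B := by
    obtain ⟨e, -⟩ := hcov ∅ (by simpa using hn)
    obtain ⟨y, hy⟩ := hne e
    exact (hs e hy).1.trans (hs e hy).2
  have hnR : (0 : ℝ) < n := by exact_mod_cast hn
  have : Nonempty (Fin n) := ⟨⟨0, hn⟩⟩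
  let f : E → (Fin n → ℝ) → ℝ := fun e x =>
    ∏ j ∈ Finset.range (n + 1), Metric.infDist (cut A B x j) (s e)
  have hf0 : ∀ e x, 0 ≤ f e x := fun e x => Finset.prod_nonneg fun _ _ => Metric.infDist_nonneg
  have hfpos : ∀ e x, 0 < f e x ↔ ∀ j ≤ n, cut A B x j ∉ s e := by
    intro e x
    have hd0 : ∀ j, Metric.infDist (cut A B x j) (s e) = 0 ↔ cut A B x j ∈ s e := fun j =>
      ((hcl e).mem_iff_infDist_zero (hne e)).symm
    constructor
    · intro h j hj hmem
      have : f e x = 0 := Finset.prod_eq_zero (Finset.mem_range.2 (by omega)) ((hd0 j).2 hmem)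
      linarith
    · intro h
      apply Finset.prod_pos
      intro j hj
      refine lt_of_le_of_ne Metric.infDist_nonneg (fun h0 => ?_)
      exact h j (by have := Finset.mem_range.1 hj; omega) ((hd0 j).1 h0.symm)
  have hfc : ∀ e, Continuous (f e) := by
    intro e
    apply continuous_finsetProd
    intro j _
    exact (Metric.continuous_infDist_pt _).comp (cut_continuous A B j)
  let F : Fin n → (Fin n → ℝ) → ℝ := fun i x => ∑ e, ∑ a ∈ L e,
    if cut A B x i.val < a ∧ a < cut A B x (i.val + 1) then f e x else 0
  have hF0 : ∀ i x, 0 ≤ F i x := by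
    intro i x
    apply Finset.sum_nonneg; intro e _
    apply Finset.sum_nonneg; intro a _
    split_ifs
    · exact hf0 e x
    · exact le_rfl
  have hFc : ∀ i, Continuous (F i) := by
    intro i
    apply continuous_finsetSum; intro e _
    apply continuous_finsetSum; intro a ha
    apply Continuous.if _ (hfc e) continuous_const
    intro x hx
    by_contra hcon
    have hpos : 0 < f e x := lt_of_le_of_ne (hf0 e x) (Ne.symm hcon)
    rw [hfpos] at hpos
    have hx' := frontier_inter_subset {x : Fin n → ℝ | cut A B x i.val < a}
      {x | a < cut A B x (i.val + 1)} hx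
    rcases hx' with h | h
    · have h1 : cut A B x i.val = a :=
        frontier_lt_subset_eq (cut_continuous A B _) continuous_const h.1
      exact hpos i.val i.2.le (h1 ▸ hLs e a ha)
    · have h1 : a = cut A B x (i.val + 1) :=
        frontier_lt_subset_eq continuous_const (cut_continuous A B _) h.2
      exact hpos (i.val + 1) i.2 (h1 ▸ hLs e a ha)
  obtain ⟨z, hz, hzB⟩ := kkm (fun i : Fin n => {x | n * F i x ≤ ∑ k, F k x})
    (fun i => isClosed_le (continuous_const.mul (hFc i))
      (continuous_finsetSum _ fun k _ => hFc k))
    (by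
      intro x _
      by_contra hcon
      push Not at hcon
      have h1 : ∀ i, ∑ k, F k x < n * F i x := fun i => not_le.1 (hcon i)
      have h2 := Finset.sum_lt_sum_of_nonempty (Finset.univ_nonempty (α := Fin n))
        (fun i _ => h1 i)
      rw [← Finset.mul_sum] at h2
      simp at h2)
  have hle : ∀ i, n * F i z ≤ ∑ k, F k z := by
    intro i
    rcases hzB i with h | h
    · have : F i z = 0 := by
        apply Finset.sum_eq_zero; intro e _
        apply Finset.sum_eq_zero; intro a _
        rw [if_neg]
        rw [cut_succ, h]
        rintro ⟨h1, h2⟩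
        linarith
      rw [this, mul_zero]
      exact Finset.sum_nonneg fun k _ => hF0 k z
    · exact h
  have hmono := cut_mono A B hAB.le z hz.1
  have hcell : ∀ e, 0 < f e z → ∀ y ∈ s e, ∃ i : Fin n, cut A B z i.val < y ∧
      y < cut A B z (i.val + 1) := by
    intro e he y hy
    rw [hfpos] at he
    apply exists_cell n (cut A B z) y
    · rw [cut_zero]; exact (hs e hy).1
    · rw [cut_last A B z hz]; exact (hs e hy).2
    · intro j hj h
      exact he j hj (h ▸ hy)
  have hsumF : ∑ i, F i z = ∑ e, f e z * (L e).card := by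
    simp only [F]
    rw [Finset.sum_comm]
    apply Finset.sum_congr rfl
    intro e _
    rw [Finset.sum_comm]
    rcases (hf0 e z).eq_or_lt with h | h
    · simp [← h]
    · rw [mul_comm, ← nsmul_eq_mul, ← Finset.sum_const]
      apply Finset.sum_congr rfl
      intro a ha
      obtain ⟨i, hi⟩ := hcell e h a (hLs e a ha)
      rw [Finset.sum_eq_single i]
      · rw [if_pos hi]
      · intro k _ hk
        rw [if_neg]
        intro h'
        exact hk (Fin.ext (cell_unique _ hmono a _ _ h' hi))
      · simp
  have hLne : ∀ e, 1 ≤ (L e).card := by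
    intro e
    obtain ⟨y, hy⟩ := hne e
    obtain ⟨a, ha, -⟩ := hseg e y hy
    exact Finset.card_pos.2 ⟨a, ha⟩
  have hsumpos : 0 < ∑ i, F i z := by
    rw [hsumF]
    obtain ⟨e, he⟩ := hcov ((Finset.Ioo 0 n).image (cut A B z)) (by
      refine lt_of_le_of_lt Finset.card_image_le ?_
      simp; omega)
    apply Finset.sum_pos'
    · intro e _; exact mul_nonneg (hf0 e z) (Nat.cast_nonneg _)
    · refine ⟨e, Finset.mem_univ _, mul_pos ?_ (by exact_mod_cast hLne e)⟩
      rw [hfpos]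
      intro j hj hmem
      rcases Nat.eq_zero_or_pos j with h | h
      · rw [h, cut_zero] at hmem
        exact lt_irrefl _ (hs e hmem).1
      · rcases hj.eq_or_lt with h' | h'
        · rw [h', cut_last A B z hz] at hmem
          exact lt_irrefl _ (hs e hmem).2
        · exact he _ (Finset.mem_image_of_mem _ (Finset.mem_Ioo.2 ⟨h, h'⟩)) hmem
  let c : ℝ := (∑ i, F i z) / n
  have hc : 0 < c := div_pos hsumpos hnR
  have hFle : ∀ i, F i z ≤ c := by
    intro i
    rw [le_div_iff₀ hnR, mul_comm]; exact hle i
  let T : E → Finset (Fin n) := fun e => if 0 < f e z then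
    Finset.univ.filter (fun i => ∃ a ∈ L e, cut A B z i.val < a ∧ a < cut A B z (i.val + 1))
    else {⟨0, hn⟩}
  have hTne : ∀ e, (T e).Nonempty := by
    intro e
    by_cases h : 0 < f e z
    · obtain ⟨a, ha⟩ := Finset.card_pos.1 (hLne e)
      obtain ⟨i, hi⟩ := hcell e h a (hLs e a ha)
      exact ⟨i, by simp only [T, h, if_true, Finset.mem_filter, Finset.mem_univ, true_and]
                   exact ⟨a, ha, hi⟩⟩
    · simp [T, h]
  have hTd : ∀ e, (T e).card ≤ d := by
    intro e
    by_cases h : 0 < f e z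
    · refine le_trans ?_ (hL e)
      have hch : ∀ i ∈ T e, ∃ a ∈ L e, cut A B z i.val < a ∧ a < cut A B z (i.val + 1) := by
        intro i hi
        simpa only [T, h, if_true, Finset.mem_filter, Finset.mem_univ, true_and] using hi
      choose! g hg1 hg2 using hch
      apply Finset.card_le_card_of_injOn g hg1
      intro i hi k hk hik
      have h2 := hg2 k hk
      rw [← hik] at h2
      exact Fin.ext (cell_unique _ hmono (g i) _ _ (hg2 i hi) h2)
    · simpa [T, h] using hd
  obtain ⟨M, hMS, hMd, hMw⟩ := furedi T hTne d hTd _ (Finset.univ.filter (fun e => 0 < f e z)) rfl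
    (fun e => f e z / c) (fun e => div_nonneg (hf0 e z) hc.le)
    (by
      intro e he
      have : f e z = 0 := le_antisymm (by simpa using he) (hf0 e z)
      simp [this])
    (by
      intro v
      rw [← Finset.sum_div, div_le_one hc]
      refine le_trans ?_ (hFle v)
      rw [Finset.sum_filter]
      apply Finset.sum_le_sum
      intro e _
      have hnn : ∀ a ∈ L e, 0 ≤ (if cut A B z v.val < a ∧ a < cut A B z (v.val + 1)
          then f e z else 0) := by
        intro a _
        split_ifs
        · exact hf0 e z
        · exact le_rfl
      by_cases hv : v ∈ T e
      · rw [if_pos hv]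
        rcases (hf0 e z).eq_or_lt with h | h
        · rw [← h]; simp
        · simp only [T, h, if_true, Finset.mem_filter, Finset.mem_univ, true_and] at hv
          obtain ⟨a, ha, hav⟩ := hv
          have := Finset.single_le_sum hnn ha
          rwa [if_pos hav] at this
      · rw [if_neg hv]
        exact Finset.sum_nonneg hnn)
  refine ⟨M, ?_, ?_⟩
  · intro e he e' he' hee
    rw [Set.disjoint_left]
    intro y hy hy'
    have key : ∀ e ∈ M, y ∈ s e → ∀ i : Fin n, cut A B z i.val < y ∧ y < cut A B z (i.val + 1) →
        i ∈ T e := by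
      intro e he hy i hi
      have hpos : 0 < f e z := by simpa using hMS he
      obtain ⟨a, ha, hay, hsub⟩ := hseg e y hy
      simp only [T, hpos, if_true, Finset.mem_filter, Finset.mem_univ, true_and]
      refine ⟨a, ha, ?_, lt_of_le_of_lt hay hi.2⟩
      by_contra hcon
      push Not at hcon
      exact (hfpos e z).1 hpos i.val i.2.le (hsub ⟨hcon, hi.1.le⟩)
    obtain ⟨i, hi⟩ := hcell e (by simpa using hMS he) y hy
    exact Finset.disjoint_left.1 (hMd e he e' he' hee) (key e he hy i hi) (key e' he' hy' i hi)
  · have hdR : (0 : ℝ) < d := by exact_mod_cast hd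
    have h1 : (n : ℝ) * c ≤ d * ∑ e, f e z := by
      have : (n : ℝ) * c = ∑ i, F i z := by simp only [c]; field_simp
      rw [this, hsumF, Finset.mul_sum]
      apply Finset.sum_le_sum
      intro e _
      rw [mul_comm]
      exact mul_le_mul_of_nonneg_right (by exact_mod_cast hL e) (hf0 e z)
    rw [← Finset.sum_div, div_le_iff₀ hc] at hMw
    have h2 : (n : ℝ) * c ≤ ((d ^ 2 - d + 1) * M.card) * c := by
      refine h1.trans ((mul_le_mul_of_nonneg_left hMw hdR.le).trans (le_of_eq ?_))
      field_simp
    have h3 := le_of_mul_le_mul_right h2 hc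
    have h4 : d ≤ d ^ 2 := by nlinarith
    have h5 : ((d ^ 2 - d + 1 : ℕ) : ℝ) = (d : ℝ) ^ 2 - d + 1 := by
      push_cast [Nat.cast_sub h4]; ring
    rw [← h5] at h3
    exact_mod_cast h3

lemma dinterval_struct (d : ℕ) (e : Set ℝ) (h : IsDInterval d e) :
    ∃ L : Finset ℝ, L.card ≤ d ∧ (∀ a ∈ L, a ∈ e) ∧
      (∀ y ∈ e, ∃ a ∈ L, a ≤ y ∧ Set.Icc a y ⊆ e) ∧ IsCompact e := by
  classical
  obtain ⟨n, a, b, hn, hab, -, rfl⟩ := h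
  refine ⟨Finset.univ.image a, ?_, ?_, ?_, ?_⟩
  · exact Finset.card_image_le.trans (by simpa using hn)
  · intro x hx
    obtain ⟨i, -, rfl⟩ := Finset.mem_image.1 hx
    exact Set.mem_iUnion.2 ⟨i, le_rfl, hab i⟩
  · intro y hy
    obtain ⟨i, hi⟩ := Set.mem_iUnion.1 hy
    exact ⟨a i, Finset.mem_image_of_mem _ (Finset.mem_univ _), hi.1, fun u hu =>
      Set.mem_iUnion.2 ⟨i, hu.1, hu.2.trans hi.2⟩⟩
  · exact isCompact_iUnion fun i => isCompact_Icc

end DInt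

/-- For a finite hypergraph of `d`-intervals, `τ(H) ≤ (d² − d + 1)·ν(H)`. -/
theorem tau_le_d_sq_sub_d_add_one_mul_nu (d : ℕ) (hd : 1 ≤ d)
    (H : Set (Set ℝ)) (hfin : H.Finite)
    (hH : ∀ e ∈ H, IsDInterval d e ∧ e.Nonempty) :
    tau H ≤ (d ^ 2 - d + 1) * nu H := by
  classical
  rcases Nat.eq_zero_or_pos (tau H) with h0 | hpos
  · rw [h0]; exact Nat.zero_le _
  have : Fintype H := hfin.fintype
  choose L hL1 hL2 hL3 hL4 using fun e : H => DInt.dinterval_struct d e.1 (hH e.1 e.2).1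
  have hbd : Bornology.IsBounded (⋃ e : H, e.1) :=
    (isCompact_iUnion fun e : H => hL4 e).isBounded
  obtain ⟨R, hR⟩ := hbd.subset_ball (0 : ℝ)
  rw [Real.ball_eq_Ioo] at hR
  obtain ⟨M, hM1, hM2⟩ := DInt.core d (tau H) hd hpos (fun e : H => e.1) L hL1 hL2 hL3
    (fun e => (hH e.1 e.2).2) (fun e => (hL4 e).isClosed) (0 - R) (0 + R)
    (fun e => (Set.subset_iUnion (fun e : H => e.1) e).trans hR)
    (by
      intro C hC
      by_contra hcon
      push Not at hcon
      have : tau H ≤ C.card := Nat.sInf_le ⟨C, fun e he => hcon ⟨e, he⟩, rfl⟩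
      omega)
  refine hM2.trans (Nat.mul_le_mul_left _ ?_)
  apply le_csSup
  · refine ⟨hfin.toFinset.card, ?_⟩
    rintro k ⟨M, hM, -, rfl⟩
    apply Finset.card_le_card
    intro e he
    exact hfin.mem_toFinset.2 (hM he)
  · refine ⟨M.map ⟨Subtype.val, Subtype.val_injective⟩, ?_, ?_, Finset.card_map _⟩
    · intro e he
      simp only [Finset.coe_map, Function.Embedding.coeFn_mk, Set.mem_image] at he
      obtain ⟨x, -, rfl⟩ := he
      exact x.2
    · intro e he e' he' hee
      simp only [Finset.coe_map, Function.Embedding.coeFn_mk, Set.mem_image] at he he'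
      obtain ⟨x, hx, rfl⟩ := he
      obtain ⟨x', hx', rfl⟩ := he'
      exact hM1 x hx x' hx' (fun h => hee (by rw [h]))
end

section
/- Let d ≥ 1, let H be a finite hypergraph of d-intervals, and let w : E(H) → ℕ be a weight system on the edges of H. Then τ*_w(H) ≤ 2d·ν_w(H). -/
/-- The weighted matching number `ν_w`: the maximum of `∑_{e ∈ M} w e` over
matchings `M` in `H`. -/
noncomputable def nuW {α : Type*} (H : Set (Set α)) (w : Set α → ℕ) : ℕ :=
  sSup {m | ∃ M : Finset (Set α), ↑M ⊆ H ∧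
    (M : Set (Set α)).PairwiseDisjoint id ∧ m = ∑ e ∈ M, w e}

/-- The fractional weighted covering number `τ*_w`: the infimum of `∑ₓ g x`
over finitely supported nonnegative `g : α → ℝ` with `∑_{x ∈ e} g x ≥ w e`
for every edge `e`. -/
noncomputable def tauStarW {α : Type*} (H : Set (Set α)) (w : Set α → ℕ) : ℝ :=
  sInf {t | ∃ g : α → ℝ, (Function.support g).Finite ∧ (∀ x, 0 ≤ g x) ∧
    (∀ e ∈ H, (w e : ℝ) ≤ ∑ᶠ x ∈ e, g x) ∧ t = ∑ᶠ x, g x}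

lemma dual_aux {ι κ : Type*} [Fintype ι] [Fintype κ] [DecidableEq ι] [DecidableEq κ]
    (A : ι → κ → ℝ) (w : ι → ℝ) (T : ℝ) (hT : 0 < T)
    (h : ∀ f : ι → ℝ, (∀ i, 0 ≤ f i) → ∀ l : ℝ, (∀ k, ∑ i, f i * A i k ≤ l) →
      ∑ i, f i * w i ≤ T * l) :
    ∃ g : κ → ℝ, (∀ k, 0 ≤ g k) ∧ ∑ k, g k = T ∧ ∀ i, w i ≤ ∑ k, A i k * g k := by
  classical
  let Φ : (κ → ℝ) →ₗ[ℝ] (ι → ℝ) := T • Matrix.mulVecLin (Matrix.of A)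
  have hΦ : ∀ g i, Φ g i = T * ∑ k, A i k * g k := by
    intro g i
    simp [Φ, Matrix.mulVec, dotProduct]
  let s : Set (ι → ℝ) := Φ '' (stdSimplex ℝ κ)
  let t : Set (ι → ℝ) := Set.Ici w
  by_cases hd : Disjoint s t
  · exfalso
    have hs1 : Convex ℝ s := (convex_stdSimplex ℝ κ).linear_image Φ
    have hs2 : IsCompact s :=
      (isCompact_stdSimplex ℝ κ).image (LinearMap.continuous_of_finiteDimensional Φ)
    obtain ⟨φ, u, v, h1, huv, h2⟩ :=
      geometric_hahn_banach_compact_closed hs1 hs2 (convex_Ici w) isClosed_Ici hd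
    have hφ : ∀ y : ι → ℝ, φ y = ∑ i, φ (Pi.single i 1) * y i := by
      intro y
      conv_lhs => rw [pi_eq_sum_univ' y]
      rw [map_sum]
      refine Finset.sum_congr rfl fun i _ => ?_
      rw [map_smul, smul_eq_mul, mul_comm]
    have hw : v < φ w := h2 w (Set.mem_Ici.2 le_rfl)
    have hpos : ∀ i, 0 ≤ φ (Pi.single i 1) := by
      intro i
      by_contra hneg
      push Not at hneg
      set c := φ (Pi.single i 1) with hc
      have hr : 0 ≤ (φ w - v) / (-c) := div_nonneg (by linarith) (by linarith)
      have := h2 (w + ((φ w - v) / (-c)) • Pi.single i 1) (by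
        rw [Set.mem_Ici]
        refine le_add_of_nonneg_right ?_
        exact smul_nonneg hr (Pi.single_nonneg.2 zero_le_one))
      rw [map_add, map_smul, smul_eq_mul, ← hc] at this
      have h3 : (φ w - v) / (-c) * c = -(φ w - v) := by
        field_simp [hneg.ne]
      linarith
    have hk : ∀ k, ∑ i, φ (Pi.single i 1) * A i k ≤ u / T := by
      intro k
      have h4 := h1 (Φ (Pi.single k 1)) ⟨_, single_mem_stdSimplex ℝ k, rfl⟩
      rw [hφ] at h4
      simp only [hΦ] at h4
      rw [le_div_iff₀ hT, Finset.sum_mul]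
      refine le_trans (le_of_eq ?_) h4.le
      refine Finset.sum_congr rfl fun i _ => ?_
      simp [Pi.single_apply]
      ring
    have h5 := h _ hpos _ hk
    rw [← hφ, mul_div_cancel₀ _ hT.ne'] at h5
    linarith
  · rw [Set.not_disjoint_iff] at hd
    obtain ⟨_, ⟨g, hg, rfl⟩, hgt⟩ := hd
    refine ⟨fun k => T * g k, fun k => mul_nonneg hT.le (hg.1 k), ?_, fun i => ?_⟩
    · rw [← Finset.mul_sum, hg.2, mul_one]
    · have := hgt i
      rw [hΦ] at this
      refine this.trans (le_of_eq ?_)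
      rw [Finset.mul_sum]
      exact Finset.sum_congr rfl fun k _ => by ring

open Classical in
lemma local_ratio (f : Set ℝ → ℝ) (C : ℝ) (hC : 0 ≤ C) (F : Finset (Set ℝ))
    (hf : ∀ e ∈ F, 0 ≤ f e) (hne : ∀ e ∈ F, e.Nonempty)
    (key : ∀ E ⊆ F, E.Nonempty → ∃ e ∈ E, ∑ e' ∈ E with ¬ Disjoint e e', f e' ≤ C) :
    ∀ E ⊆ F, ∀ w : Set ℝ → ℕ, ∃ M ⊆ E, (M : Set (Set ℝ)).PairwiseDisjoint id ∧
      ∑ e ∈ E, f e * (w e : ℝ) ≤ C * ((∑ e ∈ M, w e : ℕ) : ℝ) := by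
  intro E
  induction E using Finset.strongInduction with
  | H E ih =>
  intro hEF w
  rcases E.eq_empty_or_nonempty with rfl | hE
  · exact ⟨∅, by simp, by simp, by simp⟩
  by_cases h0 : ∃ e ∈ E, w e = 0
  · obtain ⟨e, he, hw⟩ := h0
    obtain ⟨M, hM, hd, hs⟩ := ih (E.erase e) (Finset.erase_ssubset he)
      ((Finset.erase_subset _ _).trans hEF) w
    refine ⟨M, hM.trans (Finset.erase_subset _ _), hd, ?_⟩
    rw [← Finset.add_sum_erase _ _ he]
    simpa [hw] using hs
  push Not at h0
  obtain ⟨e, he, hk⟩ := key E hEF hE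
  let w2 : Set ℝ → ℕ := fun e' => if Disjoint e e' then w e' else w e' - w e
  have hself : ¬ Disjoint e e := by
    rw [disjoint_self]
    exact (hne e (hEF he)).ne_empty
  have hw2e : w2 e = 0 := by simp only [w2, if_neg hself]; omega
  have hss : (E.filter fun e' => 0 < w2 e') ⊂ E := by
    rw [Finset.filter_ssubset]
    exact ⟨e, he, by omega⟩
  obtain ⟨M, hM, hd, hs⟩ := ih _ hss ((Finset.filter_subset _ _).trans hEF) w2
  have hME : M ⊆ E := hM.trans (Finset.filter_subset _ _)
  have hMpos : ∀ e' ∈ M, 0 < w2 e' := fun e' h' => (Finset.mem_filter.1 (hM h')).2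
  have hup : ∑ e' ∈ E, f e' * (w e' : ℝ) ≤ C * ((∑ e' ∈ M, w2 e' : ℕ) : ℝ) + C * w e := by
    have e1 : ∑ e' ∈ E, f e' * (w2 e' : ℝ) =
        ∑ e' ∈ E.filter (fun e' => 0 < w2 e'), f e' * (w2 e' : ℝ) := by
      rw [Finset.sum_filter]
      refine Finset.sum_congr rfl fun x _ => ?_
      split_ifs with hx
      · rfl
      · have : w2 x = 0 := by omega
        simp [this]
    have e2 : ∑ e' ∈ E, f e' * (w e' : ℝ) ≤ ∑ e' ∈ E, f e' * (w2 e' : ℝ) +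
        (∑ e' ∈ E with ¬ Disjoint e e', f e') * w e := by
      rw [Finset.sum_filter, Finset.sum_mul, ← Finset.sum_add_distrib]
      refine Finset.sum_le_sum fun x hx => ?_
      have hfx := hf x (hEF hx)
      by_cases hdx : Disjoint e x
      · simp [w2, hdx]
      · simp only [w2, hdx, if_false, not_false_eq_true, if_true]
        rw [← mul_add]
        refine mul_le_mul_of_nonneg_left ?_ hfx
        have : w x ≤ (w x - w e) + w e := by omega
        exact_mod_cast this
    have e3 := mul_le_mul_of_nonneg_right hk (Nat.cast_nonneg (α := ℝ) (w e))
    linarith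
  have hle : ∀ x, w2 x ≤ w x := by
    intro x
    simp only [w2]
    split_ifs <;> omega
  by_cases hint : ∃ e' ∈ M, ¬ Disjoint e e'
  · obtain ⟨e', he', hde⟩ := hint
    refine ⟨M, hME, hd, hup.trans ?_⟩
    rw [← mul_add]
    refine mul_le_mul_of_nonneg_left ?_ hC
    have hh : ∑ e' ∈ M, w2 e' + w e ≤ ∑ e' ∈ M, w e' := by
      rw [← Finset.add_sum_erase _ _ he', ← Finset.add_sum_erase _ w he']
      have h1 : ∑ x ∈ M.erase e', w2 x ≤ ∑ x ∈ M.erase e', w x :=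
        Finset.sum_le_sum fun x _ => hle x
      have h2 := hMpos e' he'
      have h3 : w2 e' = w e' - w e := by simp [w2, hde]
      omega
    exact_mod_cast hh
  · push Not at hint
    have heM : e ∉ M := fun h => hself (hint e h)
    refine ⟨insert e M, Finset.insert_subset he hME, ?_, hup.trans ?_⟩
    · rw [Finset.coe_insert]
      exact hd.insert fun j hj _ => hint j hj
    · rw [← mul_add]
      refine mul_le_mul_of_nonneg_left ?_ hC
      have hh : ∑ e' ∈ M, w2 e' + w e ≤ ∑ e' ∈ insert e M, w e' := by
        rw [Finset.sum_insert heM, add_comm]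
        exact Nat.add_le_add_left (Finset.sum_le_sum fun x _ => hle x) _
      exact_mod_cast hh

open Classical in
lemma key_edge (f : Set ℝ → ℝ) (d : ℕ) (l : ℝ) (hl : 0 ≤ l) (E : Finset (Set ℝ))
    (hE : E.Nonempty) (L : Set ℝ → Finset ℝ)
    (hf : ∀ e ∈ E, 0 ≤ f e)
    (hLd : ∀ e ∈ E, (L e).card ≤ d)
    (hL : ∀ e ∈ E, ∀ y ∈ e, ∃ x ∈ L e, x ≤ y ∧ Set.Icc x y ⊆ e)
    (hcov : ∀ e ∈ E, ∀ x ∈ L e, ∑ e' ∈ E with x ∈ e', f e' ≤ l) :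
    ∃ e ∈ E, ∑ e' ∈ E with ¬ Disjoint e e', f e' ≤ 2 * d * l := by
  by_contra hcon
  push Not at hcon
  have hS0 : 0 ≤ 2 * d * l := by positivity
  have hpt : ∀ e ∈ E, ∀ e' ∈ E, (if ¬ Disjoint e e' then (1 : ℝ) else 0) ≤
      (∑ x ∈ L e, if x ∈ e' then (1 : ℝ) else 0) + ∑ x ∈ L e', if x ∈ e then (1 : ℝ) else 0 := by
    intro e he e' he'
    have n1 : ∀ a b : Set ℝ, ∀ x ∈ L a, 0 ≤ (if x ∈ b then (1 : ℝ) else 0) := by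
      intro a b x _
      split_ifs <;> norm_num
    have s1 := Finset.sum_nonneg (n1 e e')
    have s2 := Finset.sum_nonneg (n1 e' e)
    by_cases h : ¬ Disjoint e e'
    · rw [if_pos h]
      rw [Set.not_disjoint_iff] at h
      obtain ⟨y, hy, hy'⟩ := h
      obtain ⟨x, hx, hxy, hxs⟩ := hL e he y hy
      obtain ⟨x', hx', hxy', hxs'⟩ := hL e' he' y hy'
      rcases le_total x x' with hle | hle
      · have hm : x' ∈ e := hxs ⟨hle, hxy'⟩
        have := Finset.single_le_sum (n1 e' e) hx'
        rw [if_pos hm] at this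
        linarith
      · have hm : x ∈ e' := hxs' ⟨hle, hxy⟩
        have := Finset.single_le_sum (n1 e e') hx
        rw [if_pos hm] at this
        linarith
    · rw [if_neg h]
      linarith
  have hhalf : ∑ e ∈ E, ∑ e' ∈ E, f e * f e' * (∑ x ∈ L e, if x ∈ e' then (1 : ℝ) else 0) ≤
      ∑ e ∈ E, f e * (d * l) := by
    refine Finset.sum_le_sum fun e he => ?_
    have : ∑ e' ∈ E, f e * f e' * (∑ x ∈ L e, if x ∈ e' then (1 : ℝ) else 0) =
        f e * ∑ x ∈ L e, ∑ e' ∈ E with x ∈ e', f e' := by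
      simp_rw [Finset.sum_filter, Finset.mul_sum]
      rw [Finset.sum_comm]
      refine Finset.sum_congr rfl fun x _ => Finset.sum_congr rfl fun e' _ => ?_
      split_ifs <;> simp
    rw [this]
    refine mul_le_mul_of_nonneg_left ?_ (hf e he)
    refine (Finset.sum_le_card_nsmul _ _ l (hcov e he)).trans ?_
    rw [nsmul_eq_mul]
    exact mul_le_mul_of_nonneg_right (by exact_mod_cast hLd e he) hl
  have htot : ∑ e ∈ E, f e * ∑ e' ∈ E with ¬ Disjoint e e', f e' ≤
      ∑ e ∈ E, f e * (2 * d * l) := by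
    have a1 : ∑ e ∈ E, f e * ∑ e' ∈ E with ¬ Disjoint e e', f e' ≤
        ∑ e ∈ E, ∑ e' ∈ E, f e * f e' * ((∑ x ∈ L e, if x ∈ e' then (1 : ℝ) else 0) +
          ∑ x ∈ L e', if x ∈ e then (1 : ℝ) else 0) := by
      refine Finset.sum_le_sum fun e he => ?_
      rw [Finset.sum_filter, Finset.mul_sum]
      refine Finset.sum_le_sum fun e' he' => ?_
      refine le_trans (le_of_eq ?_) (mul_le_mul_of_nonneg_left (hpt e he e' he')
        (mul_nonneg (hf e he) (hf e' he')))
      split_ifs <;> simp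
    have a2 : ∑ e ∈ E, ∑ e' ∈ E, f e * f e' * (∑ x ∈ L e', if x ∈ e then (1 : ℝ) else 0) =
        ∑ e ∈ E, ∑ e' ∈ E, f e * f e' * (∑ x ∈ L e, if x ∈ e' then (1 : ℝ) else 0) := by
      rw [Finset.sum_comm]
      refine Finset.sum_congr rfl fun x _ => Finset.sum_congr rfl fun e' _ => ?_
      rw [mul_comm (f e')]
    simp_rw [mul_add, Finset.sum_add_distrib] at a1
    rw [a2] at a1
    have a3 : ∑ e ∈ E, f e * (2 * d * l) = ∑ e ∈ E, f e * (d * l) + ∑ e ∈ E, f e * (d * l) := by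
      rw [← Finset.sum_add_distrib]
      exact Finset.sum_congr rfl fun _ _ => by ring
    linarith
  by_cases hz : ∀ e ∈ E, f e = 0
  · obtain ⟨e, he⟩ := hE
    have h1 := hcon e he
    rw [Finset.sum_eq_zero fun x hx => hz x (Finset.mem_filter.1 hx).1] at h1
    linarith
  · push Not at hz
    obtain ⟨e, he, hfe⟩ := hz
    refine absurd htot (not_le.2 ?_)
    refine Finset.sum_lt_sum (fun x hx => mul_le_mul_of_nonneg_left (hcon x hx).le (hf x hx))
      ⟨e, he, ?_⟩
    exact mul_lt_mul_of_pos_left (hcon e he) (lt_of_le_of_ne (hf e he) (Ne.symm hfe))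

open Classical in
lemma finsum_mem_aux (e : Set ℝ) (G : ℝ → ℝ) (P : Finset ℝ)
    (hGP : Function.support G ⊆ ↑P) : ∑ᶠ x ∈ e, G x = ∑ x ∈ P with x ∈ e, G x := by
  refine finsum_mem_eq_sum_of_inter_support_eq G ?_
  ext x
  simp only [Set.mem_inter_iff, Finset.coe_filter, Set.mem_ofPred_eq]
  constructor
  · rintro ⟨h1, h2⟩
    exact ⟨⟨hGP h2, h1⟩, h2⟩
  · rintro ⟨⟨_, h1⟩, h2⟩
    exact ⟨h1, h2⟩

lemma left_endpoints (d : ℕ) (e : Set ℝ) (h : IsDInterval d e) :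
    ∃ L : Finset ℝ, L.card ≤ d ∧ ∀ y ∈ e, ∃ x ∈ L, x ≤ y ∧ Set.Icc x y ⊆ e := by
  classical
  obtain ⟨n, a, b, hn, hab, _, rfl⟩ := h
  refine ⟨Finset.univ.image a, Finset.card_image_le.trans (by simpa using hn), ?_⟩
  intro y hy
  obtain ⟨i, hi⟩ := Set.mem_iUnion.1 hy
  refine ⟨a i, Finset.mem_image_of_mem _ (Finset.mem_univ i), hi.1, ?_⟩
  intro z hz
  exact Set.mem_iUnion.2 ⟨i, hz.1, hz.2.trans hi.2⟩

/-- For a finite hypergraph of `d`-intervals with a weight system `w` on its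
edges, `τ*_w(H) ≤ 2d·ν_w(H)`. -/
theorem tauStarW_le_two_d_mul_nuW (d : ℕ) (hd : 1 ≤ d)
    (H : Set (Set ℝ)) (hfin : H.Finite)
    (hH : ∀ e ∈ H, IsDInterval d e ∧ e.Nonempty) (w : Set ℝ → ℕ) :
    tauStarW H w ≤ 2 * d * (nuW H w : ℝ) := by
  classical
  have hnu : ∀ M : Finset (Set ℝ), ↑M ⊆ H → (M : Set (Set ℝ)).PairwiseDisjoint id →
      ∑ e ∈ M, w e ≤ nuW H w := by
    intro M hM hd
    refine le_csSup ⟨∑ e ∈ hfin.toFinset, w e, ?_⟩ ⟨M, hM, hd, rfl⟩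
    rintro _ ⟨M', hM', _, rfl⟩
    exact Finset.sum_le_sum_of_subset fun x hx => hfin.mem_toFinset.2 (hM' hx)
  have htau : ∀ g : ℝ → ℝ, (Function.support g).Finite → (∀ x, 0 ≤ g x) →
      (∀ e ∈ H, (w e : ℝ) ≤ ∑ᶠ x ∈ e, g x) → tauStarW H w ≤ ∑ᶠ x, g x := by
    intro g h1 h2 h3
    refine csInf_le ⟨0, ?_⟩ ⟨g, h1, h2, h3, rfl⟩
    rintro _ ⟨g', _, h2', _, rfl⟩
    exact finsum_nonneg h2'
  rcases Nat.eq_zero_or_pos (nuW H w) with h0 | hpos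
  · have := htau (fun _ => 0) (by simp) (by simp) (by
      intro e he
      have := hnu {e} (by simpa using he) (by simp)
      rw [Finset.sum_singleton] at this
      have hz : w e = 0 := by omega
      simp [hz])
    simpa [h0] using this
  have hL' : ∀ e : Set ℝ, ∃ L : Finset ℝ, e ∈ H →
      (L.card ≤ d ∧ ∀ y ∈ e, ∃ x ∈ L, x ≤ y ∧ Set.Icc x y ⊆ e) := by
    intro e
    by_cases he : e ∈ H
    · obtain ⟨L, hL⟩ := left_endpoints d e (hH e he).1
      exact ⟨L, fun _ => hL⟩
    · exact ⟨∅, fun h => absurd h he⟩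
  choose L hL using hL'
  set F := hfin.toFinset with hF
  have hFm : ∀ e, e ∈ F ↔ e ∈ H := fun e => hfin.mem_toFinset
  let P : Finset ℝ := F.biUnion L
  let A : F → P → ℝ := fun e x => if (x : ℝ) ∈ (e : Set ℝ) then 1 else 0
  have hTpos : (0 : ℝ) < 2 * d * (nuW H w : ℝ) := by
    have : (0 : ℝ) < d := by exact_mod_cast hd
    have : (0 : ℝ) < nuW H w := by exact_mod_cast hpos
    positivity
  obtain ⟨g, hg0, hgs, hgw⟩ := dual_aux A (fun e => (w e : ℝ)) (2 * d * (nuW H w : ℝ)) hTpos (by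
    intro f hf l hfl
    let f' : Set ℝ → ℝ := fun e => if h : e ∈ F then f ⟨e, h⟩ else 0
    have hf'e : ∀ e : F, f' e = f e := fun e => by simp [f']
    have hf' : ∀ e, 0 ≤ f' e := by
      intro e
      simp only [f']
      split_ifs
      · exact hf _
      · exact le_rfl
    have hcov : ∀ x ∈ P, ∑ e ∈ F with x ∈ e, f' e ≤ l := by
      intro x hx
      refine le_trans (le_of_eq ?_) (hfl ⟨x, hx⟩)
      rw [Finset.sum_filter, ← Finset.sum_coe_sort F]
      refine Finset.sum_congr rfl fun e _ => ?_
      simp only [A, hf'e]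
      split_ifs <;> simp
    have hsum : ∑ e : F, f e * (w e : ℝ) = ∑ e ∈ F, f' e * (w e : ℝ) := by
      rw [← Finset.sum_coe_sort F]
      exact Finset.sum_congr rfl fun e _ => by rw [hf'e]
    rw [hsum]
    rcases F.eq_empty_or_nonempty with hFe | ⟨e0, he0⟩
    · exfalso
      have hHe : H = ∅ := by
        ext e
        rw [← hFm, hFe]
        simp
      have : nuW H w ≤ 0 := by
        refine csSup_le ⟨_, ∅, by simp, by simp, rfl⟩ ?_
        rintro _ ⟨M, hM, _, rfl⟩
        have : M = ∅ := by
          rw [hHe] at hM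
          simpa using hM
        simp [this]
      omega
    have hl : 0 ≤ l := by
      obtain ⟨y, hy⟩ := (hH e0 ((hFm _).1 he0)).2
      obtain ⟨x, hx, _⟩ := (hL e0 ((hFm _).1 he0)).2 y hy
      exact (Finset.sum_nonneg fun e _ => hf' e).trans
        (hcov x (Finset.mem_biUnion.2 ⟨e0, he0, hx⟩))
    obtain ⟨M, hM, hMd, hMs⟩ := local_ratio f' (2 * d * l) (by positivity) F
      (fun e _ => hf' e) (fun e he => (hH e ((hFm _).1 he)).2) (by
        intro E hEF hE
        refine key_edge f' d l hl E hE L (fun e _ => hf' e)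
          (fun e he => (hL e ((hFm _).1 (hEF he))).1)
          (fun e he => (hL e ((hFm _).1 (hEF he))).2) ?_
        intro e he x hx
        refine le_trans ?_ (hcov x (Finset.mem_biUnion.2 ⟨e, hEF he, hx⟩))
        exact Finset.sum_le_sum_of_subset_of_nonneg (Finset.filter_subset_filter _ hEF)
          (fun e _ _ => hf' e)) F (Finset.Subset.refl _) w
    have hMn : ((∑ e ∈ M, w e : ℕ) : ℝ) ≤ nuW H w := by
      exact_mod_cast hnu M (fun e he => (hFm _).1 (hM he)) hMd
    have := mul_le_mul_of_nonneg_left hMn (show 0 ≤ 2 * d * l by positivity)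
    linarith)
  let G : ℝ → ℝ := fun x => if h : x ∈ P then g ⟨x, h⟩ else 0
  have hGg : ∀ x : P, G x = g x := fun x => by simp [G]
  have hGP : Function.support G ⊆ ↑P := by
    intro x hx
    by_contra hxP
    exact hx (by simp only [G]; rw [dif_neg (by simpa using hxP)])
  have hG0 : ∀ x, 0 ≤ G x := by
    intro x
    simp only [G]
    split_ifs
    · exact hg0 _
    · exact le_rfl
  have hres := htau G (P.finite_toSet.subset hGP) hG0 (by
    intro e he
    have h1 := hgw ⟨e, (hFm e).2 he⟩
    refine h1.trans (le_of_eq ?_)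
    rw [finsum_mem_aux e G P hGP, Finset.sum_filter,
      ← Finset.sum_coe_sort P]
    refine Finset.sum_congr rfl fun x _ => ?_
    simp only [A, hGg]
    split_ifs <;> simp)
  rw [finsum_eq_sum_of_support_subset G hGP, ← Finset.sum_coe_sort P] at hres
  simp_rw [hGg] at hres
  rwa [hgs] at hres
end

section
/- Let d ≥ 1, let H be a finite intersecting hypergraph of d-intervals (every two edges of H intersect), and let w : E(H) → ℕ be a weight system on the edges of H. Then τ_w(H) ≤ d²·ν_w(H). -/
/-- The weighted covering number `τ_w`: the minimum of `∑ₓ g x` over finitely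
supported `g : α → ℕ` with `∑_{x ∈ e} g x ≥ w e` for every edge `e`. -/
noncomputable def tauW {α : Type*} (H : Set (Set α)) (w : Set α → ℕ) : ℕ :=
  sInf {m | ∃ g : α → ℕ, (Function.support g).Finite ∧
    (∀ e ∈ H, w e ≤ ∑ᶠ x ∈ e, g x) ∧ m = ∑ᶠ x, g x}


/-! ### The Scarf combinatorial lemma -/

/-- `S` is dominant: every element is below all of `S` in some order. -/
def ScarfDom {Y I : Type} (r : I → Y → ℕ) (S : Finset Y) : Prop :=
  ∀ y, ∃ i, ∀ s ∈ S, r i y ≤ r i s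

theorem scarf_facet {Y I : Type} [Fintype Y] [DecidableEq Y] [Fintype I] [DecidableEq I]
    (r : I → Y → ℕ) (hr : ∀ i, Function.Injective (r i)) (D : Finset Y)
    (hD : D.card + 1 = Fintype.card I) (hne : D.Nonempty)
    (slack : I → Y) (x0 : Y) (hx0 : x0 ∈ D)
    (hsl : ∀ i j, j ≠ i → r j x0 < r j (slack i))
    (N : Finset Y) (hN : ∀ y, y ∈ N ↔ y ∉ D ∧ ScarfDom r (insert y D)) :
    Even N.card := by
  classical
  rcases N.eq_empty_or_nonempty with h0 | ⟨y0, hy0⟩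
  · simp [h0]
  have hDom : ScarfDom r D := by
    intro y
    obtain ⟨i, hi⟩ := ((hN y0).1 hy0).2 y
    exact ⟨i, fun s hs => hi s (Finset.mem_insert_of_mem hs)⟩
  have hmu : ∀ i, ∃ s ∈ D, ∀ t ∈ D, r i s ≤ r i t := fun i => Finset.exists_min_image D (r i) hne
  choose μ hμD hμ using hmu
  have honto : ∀ s ∈ D, ∃ i, μ i = s := by
    intro s hs
    obtain ⟨i, hi⟩ := hDom s
    exact ⟨i, hr i (le_antisymm (hμ i s hs) (hi _ (hμD i)))⟩
  obtain ⟨a, -, b, -, hab, hμab⟩ := Finset.exists_ne_map_eq_of_card_lt_of_maps_to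
    (s := (Finset.univ : Finset I)) (t := D) (f := μ) (by rw [Finset.card_univ]; omega)
    (fun i _ => hμD i)
  -- onto after removing an index implies injective
  have hinj : ∀ i, (∀ s ∈ D, ∃ j, j ≠ i ∧ μ j = s) →
      ∀ j k, j ≠ i → k ≠ i → μ j = μ k → j = k := by
    intro i hi j k hj hk hjk
    have him : (Finset.univ.erase i).image μ = D := by
      ext s
      simp only [Finset.mem_image, Finset.mem_erase, Finset.mem_univ, and_true]
      constructor
      · rintro ⟨j, _, rfl⟩; exact hμD j
      · exact hi s
    have hc : ((Finset.univ.erase i).image μ).card = (Finset.univ.erase i).card := by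
      rw [him, Finset.card_erase_of_mem (Finset.mem_univ _), Finset.card_univ]; omega
    exact Finset.card_image_iff.1 hc (by simp [hj]) (by simp [hk]) hjk
  have hontoab : ∀ i, (i = a ∨ i = b) → ∀ s ∈ D, ∃ j, j ≠ i ∧ μ j = s := by
    intro i hi s hs
    obtain ⟨k, hk⟩ := honto s hs
    by_cases hki : k = i
    · rcases hi with rfl | rfl
      · exact ⟨b, hab.symm, by rw [← hμab, ← hki, hk]⟩
      · exact ⟨a, hab, by rw [hμab, ← hki, hk]⟩
    · exact ⟨k, hki, hk⟩
  let M : I → Finset Y := fun i => Finset.univ.filter fun y => ∀ j, j ≠ i → r j (μ j) < r j y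
  have hM : ∀ i y, y ∈ M i ↔ ∀ j, j ≠ i → r j (μ j) < r j y := by
    intro i y; simp [M]
  have hMne : ∀ i, (M i).Nonempty := by
    intro i
    refine ⟨slack i, (hM _ _).2 fun j hj => ?_⟩
    exact lt_of_le_of_lt (hμ j x0 hx0) (hsl i j hj)
  have hmax : ∀ i, ∃ y ∈ M i, ∀ z ∈ M i, r i z ≤ r i y :=
    fun i => Finset.exists_max_image (M i) (r i) (hMne i)
  choose top htopM htop using hmax
  have hset : N = {top a, top b} := by
    ext y
    rw [hN, Finset.mem_insert, Finset.mem_singleton]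
    constructor
    · rintro ⟨hyD, hy⟩
      obtain ⟨i, hi⟩ := hy y
      have hmin : ∀ s ∈ D, ∃ j, j ≠ i ∧ μ j = s ∧ r j s < r j y := by
        intro s hs
        obtain ⟨j, hj⟩ := hy s
        have h1 : r j s ≤ r j y := hj y (Finset.mem_insert_self _ _)
        have hsy : s ≠ y := fun h => hyD (h ▸ hs)
        have h2 : r j s < r j y := lt_of_le_of_ne h1 fun h => hsy (hr j h)
        refine ⟨j, ?_, ?_, h2⟩
        · rintro rfl
          exact absurd (hi s (Finset.mem_insert_of_mem hs)) (not_le.2 h2)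
        · exact hr j (le_antisymm (hμ j s hs) (hj _ (Finset.mem_insert_of_mem (hμD j))))
      have hin := hinj i (fun s hs => by
        obtain ⟨j, h1, h2, _⟩ := hmin s hs
        exact ⟨j, h1, h2⟩)
      have hiab : i = a ∨ i = b := by
        by_contra hcon
        push Not at hcon
        exact hab (hin a b (Ne.symm hcon.1) (Ne.symm hcon.2) hμab)
      have hyM : y ∈ M i := by
        rw [hM]
        intro j hj
        obtain ⟨k, hk1, hk2, hk3⟩ := hmin (μ j) (hμD j)
        have := hin k j hk1 hj hk2
        subst this
        exact hk3
      have hytop : y = top i := by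
        apply hr i
        apply le_antisymm (htop i y hyM)
        obtain ⟨k, hk⟩ := hy (top i)
        by_cases hki : k = i
        · subst hki; exact hk y (Finset.mem_insert_self _ _)
        · exact absurd (hk _ (Finset.mem_insert_of_mem (hμD k)))
            (not_le.2 ((hM _ _).1 (htopM i) k hki))
      rcases hiab with rfl | rfl
      · exact Or.inl hytop
      · exact Or.inr hytop
    · intro hy
      obtain ⟨i, hi, rfl⟩ : ∃ i, (i = a ∨ i = b) ∧ y = top i := by
        rcases hy with h | h
        · exact ⟨a, Or.inl rfl, h⟩
        · exact ⟨b, Or.inr rfl, h⟩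
      have hyM := (hM _ _).1 (htopM i)
      constructor
      · intro hyD
        obtain ⟨j, hj1, hj2⟩ := hontoab i hi _ hyD
        have := hyM j hj1
        rw [hj2] at this
        exact lt_irrefl _ this
      · intro z
        by_cases hz : z ∈ M i
        · refine ⟨i, fun s hs => ?_⟩
          rcases Finset.mem_insert.1 hs with rfl | hs'
          · exact htop i z hz
          · obtain ⟨k, hk⟩ := hDom (top i)
            by_cases hki : k = i
            · subst hki; exact (htop k z hz).trans (hk s hs')
            · exact absurd (hk _ (hμD k)) (not_le.2 (hyM k hki))
        · rw [hM] at hz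
          push Not at hz
          obtain ⟨j, hj1, hj2⟩ := hz
          refine ⟨j, fun s hs => ?_⟩
          rcases Finset.mem_insert.1 hs with rfl | hs
          · exact hj2.trans (hyM j hj1).le
          · exact hj2.trans (hμ j s hs)
  have hne' : top a ≠ top b := by
    intro h
    obtain ⟨k, hk⟩ := hDom (top a)
    have h1 := hk _ (hμD k)
    by_cases hka : k = a
    · have h2 := (hM _ _).1 (htopM b) k (by rw [hka]; exact hab)
      rw [← h] at h2
      omega
    · have h2 := (hM _ _).1 (htopM a) k hka
      omega
  rw [hset, Finset.card_pair hne']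
  exact even_two

theorem scarf_room {Y I : Type} [DecidableEq Y] [Fintype I] [DecidableEq I]
    (c : Y → I) (i0 : I) (S : Finset Y) (hS : S.card = Fintype.card I)
    (hc : S.image c ≠ Finset.univ) :
    Even (S.filter fun y => (S.erase y).image c = Finset.univ.erase i0).card := by
  classical
  rcases (S.filter fun y => (S.erase y).image c = Finset.univ.erase i0).eq_empty_or_nonempty
    with h0 | ⟨y, hy⟩
  · simp [h0]
  obtain ⟨hyS, hy⟩ := Finset.mem_filter.1 hy
  have hcard : (S.erase y).card + 1 = Fintype.card I := by
    rw [Finset.card_erase_add_one hyS, hS]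
  have hinj : Set.InjOn c (S.erase y : Finset Y) := by
    apply Finset.card_image_iff.1
    rw [hy, Finset.card_erase_of_mem (Finset.mem_univ _), Finset.card_univ]; omega
  have hyc : c y ≠ i0 := by
    intro h
    apply hc
    rw [← Finset.insert_erase hyS, Finset.image_insert, hy, h,
      Finset.insert_erase (Finset.mem_univ _)]
  have : c y ∈ (S.erase y).image c := by rw [hy]; simp [hyc]
  obtain ⟨z, hz, hzy⟩ := Finset.mem_image.1 this
  have hzne := Finset.ne_of_mem_erase hz
  have hzS := Finset.mem_of_mem_erase hz
  have : (S.filter fun y => (S.erase y).image c = Finset.univ.erase i0) = {y, z} := by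
    ext t
    simp only [Finset.mem_filter, Finset.mem_insert, Finset.mem_singleton]
    constructor
    · rintro ⟨htS, ht⟩
      by_contra hcon
      push Not at hcon
      have hte : t ∈ S.erase y := Finset.mem_erase.2 ⟨hcon.1, htS⟩
      have h1 : c t ∈ Finset.univ.erase i0 := hy ▸ Finset.mem_image_of_mem c hte
      rw [← ht] at h1
      obtain ⟨u, hu, huc⟩ := Finset.mem_image.1 h1
      have hut := Finset.ne_of_mem_erase hu
      have huS := Finset.mem_of_mem_erase hu
      by_cases huy : u = y
      · subst huy
        exact hcon.2 (hinj hte hz (by rw [hzy, huc]))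
      · exact hut (hinj (Finset.mem_coe.2 (Finset.mem_erase.2 ⟨huy, huS⟩)) hte huc)
    · rintro (rfl | rfl)
      · exact ⟨hyS, hy⟩
      · refine ⟨hzS, ?_⟩
        rw [← hy]
        have e1 : S.erase t = insert y ((S.erase t).erase y) :=
          (Finset.insert_erase (Finset.mem_erase.2 ⟨hzne.symm, hyS⟩)).symm
        have e2 : S.erase y = insert t ((S.erase y).erase t) := (Finset.insert_erase hz).symm
        rw [e1, e2, Finset.image_insert, Finset.image_insert, hzy, Finset.erase_right_comm]
  rw [this, Finset.card_pair hzne.symm]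
  exact even_two

theorem scarf {X I : Type} [Fintype X] [DecidableEq X] [Nonempty X] [Fintype I] [DecidableEq I]
    (hI : 2 ≤ Fintype.card I) (r : I → X → ℕ) (hr : ∀ i, Function.Injective (r i)) (c : X → I) :
    ∃ σ : Finset X, σ.Nonempty ∧ ∃ J : Finset I, (∀ i ∈ J, ∃ x ∈ σ, c x = i) ∧
      ∀ y, ∃ i ∈ J, ∀ x ∈ σ, r i y ≤ r i x := by
  classical
  obtain ⟨B, hB⟩ : ∃ B, ∀ i x, r i x < B := by
    refine ⟨(Finset.univ.sup fun p : I × X => r p.1 p.2) + 1, fun i x => Nat.lt_succ_of_le ?_⟩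
    exact Finset.le_sup (f := fun p : I × X => r p.1 p.2) (Finset.mem_univ (i, x))
  let ι := Fintype.equivFin I
  let R : I → X ⊕ I → ℕ := fun i => Sum.elim (fun x => r i x + 1)
    (fun k => if k = i then 0 else B + 1 + ι k)
  have hRl : ∀ i x, R i (Sum.inl x) = r i x + 1 := fun i x => rfl
  have hRs : ∀ i, R i (Sum.inr i) = 0 := fun i => by simp [R]
  have hRr : ∀ i k, k ≠ i → R i (Sum.inr k) = B + 1 + ι k := fun i k h => by simp [R, h]
  have hR : ∀ i, Function.Injective (R i) := by
    rintro i (x | k) (x' | k') h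
    · rw [hRl, hRl] at h
      have h' : r i x = r i x' := by omega
      rw [hr i h']
    · have := hB i x
      rw [hRl] at h
      by_cases hk : k' = i
      · subst hk; rw [hRs] at h; omega
      · rw [hRr _ _ hk] at h; omega
    · have := hB i x'
      rw [hRl] at h
      by_cases hk : k = i
      · subst hk; rw [hRs] at h; omega
      · rw [hRr _ _ hk] at h; omega
    · by_cases hk : k = i <;> by_cases hk' : k' = i
      · rw [hk, hk']
      · subst hk; rw [hRs, hRr _ _ hk'] at h; omega
      · subst hk'; rw [hRs, hRr _ _ hk] at h; omega
      · rw [hRr _ _ hk, hRr _ _ hk'] at h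
        have : ι k = ι k' := Fin.ext (by omega)
        rw [ι.injective this]
  let C : X ⊕ I → I := Sum.elim c id
  obtain ⟨i0⟩ : Nonempty I := Fintype.card_pos_iff.1 (by omega)
  have key : ∃ S : Finset (X ⊕ I), ScarfDom R S ∧ S.image C = Finset.univ := by
    by_contra hcon
    push Not at hcon
    let doors : Finset (Finset (X ⊕ I)) := Finset.univ.filter fun D =>
      D.card + 1 = Fintype.card I ∧ D.image C = Finset.univ.erase i0
    let rooms : Finset (Finset (X ⊕ I)) := Finset.univ.filter fun S =>
      S.card = Fintype.card I ∧ ScarfDom R S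
    let nb : Finset (X ⊕ I) → Finset (X ⊕ I) := fun D =>
      Finset.univ.filter fun y => y ∉ D ∧ ScarfDom R (insert y D)
    let back : Finset (X ⊕ I) → Finset (X ⊕ I) := fun S =>
      S.filter fun y => (S.erase y).image C = Finset.univ.erase i0
    have hcount : (doors.sigma nb).card = (rooms.sigma back).card := by
      refine Finset.card_bij' (fun p _ => ⟨insert p.2 p.1, p.2⟩) (fun p _ => ⟨p.1.erase p.2, p.2⟩)
        ?_ ?_ ?_ ?_
      · rintro ⟨D, y⟩ h
        simp only [Finset.mem_sigma, doors, nb, rooms, back, Finset.mem_filter, Finset.mem_univ,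
          true_and] at h ⊢
        obtain ⟨⟨h1, h2⟩, h3, h4⟩ := h
        refine ⟨⟨by rw [Finset.card_insert_of_notMem h3, h1], h4⟩, Finset.mem_insert_self _ _, ?_⟩
        rw [Finset.erase_insert h3, h2]
      · rintro ⟨S, y⟩ h
        simp only [Finset.mem_sigma, doors, nb, rooms, back, Finset.mem_filter, Finset.mem_univ,
          true_and] at h ⊢
        obtain ⟨⟨h1, h2⟩, h3, h4⟩ := h
        refine ⟨⟨by rw [Finset.card_erase_add_one h3, h1], h4⟩, Finset.notMem_erase _ _, ?_⟩
        rw [Finset.insert_erase h3]; exact h2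
      · rintro ⟨D, y⟩ h
        simp only [Finset.mem_sigma, nb, Finset.mem_filter, Finset.mem_univ, true_and] at h
        simp [Finset.erase_insert h.2.1]
      · rintro ⟨S, y⟩ h
        simp only [Finset.mem_sigma, back, Finset.mem_filter] at h
        simp [Finset.insert_erase h.2.1]
    have heven : Even (rooms.sigma back).card := by
      rw [Finset.card_sigma]
      refine Finset.even_sum _ fun S hS => ?_
      obtain ⟨h1, h2⟩ := (Finset.mem_filter.1 hS).2
      exact scarf_room C i0 S h1 (hcon S h2)
    let D0 : Finset (X ⊕ I) := (Finset.univ.erase i0).image Sum.inr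
    have hD0card : D0.card + 1 = Fintype.card I := by
      rw [Finset.card_image_of_injective _ Sum.inr_injective,
        Finset.card_erase_add_one (Finset.mem_univ _), Finset.card_univ]
    have hD0mem : ∀ k, Sum.inr k ∈ D0 ↔ k ≠ i0 := by intro k; simp [D0]
    have hD0l : ∀ x, Sum.inl x ∉ D0 := by intro x; simp [D0]
    have hD0 : D0 ∈ doors := by
      refine Finset.mem_filter.2 ⟨Finset.mem_univ _, hD0card, ?_⟩
      rw [Finset.image_image]
      ext i; simp [C]
    have hodd : Odd (doors.sigma nb).card := by
      rw [Finset.card_sigma, ← Finset.add_sum_erase _ _ hD0]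
      apply Odd.add_even
      · have : ∃ x0 : X, nb D0 = {Sum.inl x0} := by
          obtain ⟨x0, -, hx0⟩ := Finset.exists_max_image (Finset.univ : Finset X) (r i0)
            Finset.univ_nonempty
          refine ⟨x0, ?_⟩
          ext y
          simp only [nb, Finset.mem_filter, Finset.mem_univ, true_and, Finset.mem_singleton]
          constructor
          · rintro ⟨h1, h2⟩
            obtain ⟨i, hi⟩ := h2 (Sum.inl x0)
            rcases y with y | k
            · have hii : i = i0 := by
                by_contra hne
                have := hi _ (Finset.mem_insert_of_mem ((hD0mem i).2 hne))
                rw [hRl, hRs] at this; omega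
              subst hii
              have := hi _ (Finset.mem_insert_self _ _)
              rw [hRl, hRl] at this
              have h3 := hx0 y (Finset.mem_univ _)
              rw [hr i (le_antisymm h3 (by omega))]
            · have hk : k = i0 := by
                by_contra hne; exact h1 ((hD0mem k).2 hne)
              have : R i (Sum.inl x0) ≤ R i (Sum.inr i) := by
                apply hi
                by_cases hii : i = i0
                · rw [hii, hk]; exact Finset.mem_insert_self _ _
                · exact Finset.mem_insert_of_mem ((hD0mem i).2 hii)
              rw [hRl, hRs] at this; omega
          · rintro rfl
            refine ⟨hD0l _, ?_⟩
            rintro (z | k)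
            · refine ⟨i0, fun s hs => ?_⟩
              rcases Finset.mem_insert.1 hs with rfl | hs
              · rw [hRl, hRl]
                have := hx0 z (Finset.mem_univ _); omega
              · rcases s with s | k
                · exact absurd hs (hD0l s)
                · rw [hRl, hRr _ _ ((hD0mem k).1 hs)]
                  have := hB i0 z; omega
            · exact ⟨k, fun s _ => by rw [hRs]; omega⟩
        obtain ⟨x0, h⟩ := this
        rw [h, Finset.card_singleton]; exact odd_one
      · refine Finset.even_sum _ fun D hD => ?_
        obtain ⟨hne, hD⟩ := Finset.mem_erase.1 hD
        obtain ⟨h1, h2⟩ := (Finset.mem_filter.1 hD).2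
        obtain ⟨x0, hx0⟩ : ∃ x0, Sum.inl x0 ∈ D := by
          by_contra hno
          push Not at hno
          apply hne
          apply Finset.eq_of_subset_of_card_le
          · rintro (x | k) hs
            · exact absurd hs (hno x)
            · have : C (Sum.inr k) ∈ D.image C := Finset.mem_image_of_mem _ hs
              rw [h2] at this
              rw [hD0mem]
              exact Finset.ne_of_mem_erase this
          · omega
        refine scarf_facet R hR D h1 ⟨_, hx0⟩ Sum.inr _ hx0 ?_ (nb D) ?_
        · intro i j hj
          rw [hRl, hRr _ _ hj.symm]
          have := hB j x0; omega
        · intro y; simp [nb]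
    rw [hcount] at hodd
    exact (Nat.not_even_iff_odd.2 hodd) heven
  obtain ⟨S, hSd, hSc⟩ := key
  let σ : Finset X := Finset.univ.filter fun x => Sum.inl x ∈ S
  let J : Finset I := Finset.univ.filter fun i => Sum.inr i ∉ S
  have hJ : ∀ i ∈ J, ∃ x ∈ σ, c x = i := by
    intro i hi
    have hi' : Sum.inr i ∉ S := (Finset.mem_filter.1 hi).2
    have : i ∈ S.image C := by rw [hSc]; exact Finset.mem_univ _
    obtain ⟨s, hs, hsi⟩ := Finset.mem_image.1 this
    rcases s with x | k
    · exact ⟨x, Finset.mem_filter.2 ⟨Finset.mem_univ _, hs⟩, hsi⟩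
    · have : k = i := hsi
      subst this; exact absurd hs hi'
  have hdom : ∀ y, ∃ i ∈ J, ∀ x ∈ σ, r i y ≤ r i x := by
    intro y
    obtain ⟨i, hi⟩ := hSd (Sum.inl y)
    refine ⟨i, Finset.mem_filter.2 ⟨Finset.mem_univ _, fun h => ?_⟩, fun x hx => ?_⟩
    · have := hi _ h
      rw [hRl, hRs] at this; omega
    · have := hi _ (Finset.mem_filter.1 hx).2
      rw [hRl, hRl] at this; omega
  refine ⟨σ, ?_, J, hJ, hdom⟩
  obtain ⟨i, hi, -⟩ := hdom (Classical.arbitrary X)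
  obtain ⟨x, hx, -⟩ := hJ i hi
  exact ⟨x, hx⟩

/-! ### From the Scarf lemma to a KKM-type statement -/

theorem scarf_grid {I : Type} [Fintype I] [DecidableEq I] (hI : 2 ≤ Fintype.card I)
    (c : (I → ℕ) → I) (N : ℕ) :
    ∃ z : I → ℕ, ∑ i, z i = N ∧ ∀ i, z i ≤ Fintype.card I ∨
      ∃ x : I → ℕ, ∑ i, x i = N ∧ c x = i ∧
        ∀ k, z k ≤ x k + Fintype.card I ∧ x k ≤ z k + Fintype.card I := by
  classical
  obtain ⟨i0⟩ : Nonempty I := Fintype.card_pos_iff.1 (by omega)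
  let X := {x : I → ℕ // x ∈ Finset.piAntidiag (Finset.univ : Finset I) N}
  have hX : ∀ x : X, ∑ i, x.1 i = N := fun x => (Finset.mem_piAntidiag.1 x.2).1
  have mk : ∀ x : I → ℕ, ∑ i, x i = N → ∃ y : X, y.1 = x := fun x hx =>
    ⟨⟨x, Finset.mem_piAntidiag.2 ⟨hx, fun _ _ => Finset.mem_univ _⟩⟩, rfl⟩
  have : Nonempty X := by
    obtain ⟨y, -⟩ := mk (Pi.single i0 N) (by simp)
    exact ⟨y⟩
  let ι := Fintype.equivFin X
  let K := Fintype.card X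
  let r : I → X → ℕ := fun i x => x.1 i * K + ι x
  have hle : ∀ i (x y : X), r i x ≤ r i y → x.1 i ≤ y.1 i := by
    intro i x y h
    by_contra hlt
    push Not at hlt
    have h1 : (y.1 i + 1) * K ≤ x.1 i * K := Nat.mul_le_mul_right _ hlt
    have h2 : (ι y : ℕ) < K := (ι y).2
    have h3 : x.1 i * K + ι x ≤ y.1 i * K + ι y := h
    rw [add_mul] at h1
    omega
  have hr : ∀ i, Function.Injective (r i) := by
    intro i x y h
    have h1 := le_antisymm (hle i x y h.le) (hle i y x h.ge)
    have h3 : x.1 i * K + ι x = y.1 i * K + ι y := h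
    rw [h1] at h3
    exact ι.injective (Fin.ext (by omega))
  obtain ⟨σ, ⟨z, hz⟩, J, hJ, hdom⟩ := scarf hI r hr (fun x => c x.1)
  have hmin : ∀ i, ∃ x ∈ σ, ∀ y ∈ σ, x.1 i ≤ y.1 i := fun i =>
    Finset.exists_min_image σ (fun x => x.1 i) ⟨z, hz⟩
  choose μ hμσ hμ using hmin
  let a : I → ℕ := fun i => (μ i).1 i
  have hsum : N < ∑ i ∈ J, (a i + 1) := by
    by_contra hcon
    push Not at hcon
    have hJne : J.Nonempty := by
      obtain ⟨i, hi, -⟩ := hdom z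
      exact ⟨i, hi⟩
    obtain ⟨j, hj⟩ := hJne
    let y : I → ℕ := fun i => (if i ∈ J then a i + 1 else 0) +
      (if i = j then N - ∑ i ∈ J, (a i + 1) else 0)
    have hy : ∑ i, y i = N := by
      simp only [y]
      rw [Finset.sum_add_distrib, Finset.sum_ite_mem, Finset.univ_inter, Finset.sum_ite_eq']
      simp only [Finset.mem_univ, if_true]
      omega
    obtain ⟨y', hy'⟩ := mk y hy
    obtain ⟨i, hi, h⟩ := hdom y'
    have h1 := hle _ _ _ (h (μ i) (hμσ i))
    rw [hy'] at h1
    simp only [y, hi, if_true, a] at h1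
    omega
  have hcard : J.card ≤ Fintype.card I := Finset.card_le_univ _
  rw [Finset.sum_add_distrib, Finset.sum_const, smul_eq_mul, mul_one] at hsum
  have hbound : ∀ x ∈ σ, ∀ k, (k ∈ J → x.1 k ≤ a k + Fintype.card I) ∧
      (k ∉ J → x.1 k ≤ Fintype.card I) := by
    intro x hx k
    have h1 := hX x
    have h2 : ∀ s : Finset I, ∑ i ∈ s, x.1 i ≤ N := fun s =>
      (Finset.sum_le_sum_of_subset (Finset.subset_univ s)).trans h1.le
    constructor
    · intro hk
      have h3 := h2 J
      rw [← Finset.add_sum_erase _ _ hk] at h3 hsum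
      have h4 : ∑ i ∈ J.erase k, a i ≤ ∑ i ∈ J.erase k, x.1 i :=
        Finset.sum_le_sum fun i _ => hμ i x hx
      omega
    · intro hk
      have h3 := h2 (insert k J)
      rw [Finset.sum_insert hk] at h3
      have h4 : ∑ i ∈ J, a i ≤ ∑ i ∈ J, x.1 i := Finset.sum_le_sum fun i _ => hμ i x hx
      omega
  have hclose : ∀ x ∈ σ, ∀ y ∈ σ, ∀ k, x.1 k ≤ y.1 k + Fintype.card I := by
    intro x hx y hy k
    by_cases hk : k ∈ J
    · have := (hbound x hx k).1 hk
      have h2 : a k ≤ y.1 k := hμ k y hy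
      omega
    · have := (hbound x hx k).2 hk
      omega
  refine ⟨z.1, hX z, fun i => ?_⟩
  by_cases hi : i ∈ J
  · obtain ⟨x, hx, hxi⟩ := hJ i hi
    exact Or.inr ⟨x.1, hX x, hxi, fun k => ⟨hclose z hz x hx k, hclose x hx z hz k⟩⟩
  · exact Or.inl ((hbound z hz i).2 hi)

open Filter Topology in
theorem kkm_balanced {I : Type} [Fintype I] (hI : 2 ≤ Fintype.card I)
    (g : (I → ℝ) → I → ℝ) (hg : Continuous g) (hg0 : ∀ x i, 0 ≤ g x i)
    (hgz : ∀ x i, x i = 0 → g x i = 0) :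
    ∃ x ∈ stdSimplex ℝ I, ∀ i j, g x i = g x j := by
  classical
  have : Nonempty I := Fintype.card_pos_iff.1 (by omega)
  have hlab : ∀ x : I → ℝ, ∃ i, ∀ j, g x i ≤ g x j := fun x => by
    obtain ⟨i, -, hi⟩ := Finset.exists_min_image Finset.univ (g x) Finset.univ_nonempty
    exact ⟨i, fun j => hi j (Finset.mem_univ _)⟩
  choose lab hlab using hlab
  let s : ℕ → (I → ℕ) → (I → ℝ) := fun N x i => (x i : ℝ) / (N + 1 : ℝ)
  have hgrid := fun N : ℕ => scarf_grid hI (fun x => lab (s N x)) (N + 1)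
  choose z hzsum hz using hgrid
  let m : ℝ := Fintype.card I
  let Z : ℕ → I → ℝ := fun N => s N (z N)
  have hpos : ∀ N : ℕ, (0 : ℝ) < N + 1 := fun N => by positivity
  have hZ : ∀ N, Z N ∈ stdSimplex ℝ I := by
    intro N
    refine ⟨fun i => by simp only [Z, s]; positivity, ?_⟩
    simp only [Z, s]
    rw [← Finset.sum_div, div_eq_one_iff_eq (hpos N).ne']
    exact_mod_cast hzsum N
  obtain ⟨x, hx, φ, hφ, hlim⟩ := (isCompact_stdSimplex ℝ I).tendsto_subseq hZ
  have hm : Tendsto (fun N : ℕ => m / ((N : ℝ) + 1)) atTop (𝓝 0) := by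
    have := (tendsto_one_div_add_atTop_nhds_zero_nat (𝕜 := ℝ)).const_mul m
    simpa [mul_one_div, div_eq_mul_inv] using this
  have hmφ := hm.comp hφ.tendsto_atTop
  have hlimi : ∀ i, Tendsto (fun n => Z (φ n) i) atTop (𝓝 (x i)) := fun i =>
    (tendsto_pi_nhds.1 hlim) i
  refine ⟨x, hx, ?_⟩
  suffices h : ∀ i j, g x i ≤ g x j from fun i j => le_antisymm (h i j) (h j i)
  intro i j
  by_cases hfreq : ∃ᶠ n in atTop, z (φ n) i ≤ Fintype.card I
  · have h0 : x i ≤ 0 := by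
      refine le_of_tendsto_of_tendsto_of_frequently (hlimi i) hmφ (hfreq.mono fun n hn => ?_)
      simp only [Z, s, Function.comp, m]
      apply div_le_div_of_nonneg_right _ (hpos _).le
      exact_mod_cast hn
    rw [hgz x i (le_antisymm h0 (hx.1 i))]
    exact hg0 x j
  · rw [not_frequently] at hfreq
    have hev : ∀ n, ∃ u : I → ℝ, ¬ z (φ n) i ≤ Fintype.card I →
        lab u = i ∧ ∀ k, |u k - Z (φ n) k| ≤ m / ((φ n : ℝ) + 1) := by
      intro n
      by_cases hn : z (φ n) i ≤ Fintype.card I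
      · exact ⟨0, fun h => absurd hn h⟩
      · obtain ⟨u, -, hu, huk⟩ := (hz (φ n) i).resolve_left hn
        refine ⟨s (φ n) u, fun _ => ⟨hu, fun k => ?_⟩⟩
        simp only [Z, s, m]
        rw [← sub_div, abs_div, abs_of_pos (hpos _)]
        apply div_le_div_of_nonneg_right _ (hpos _).le
        have h1 : (z (φ n) k : ℝ) ≤ u k + Fintype.card I := by exact_mod_cast (huk k).1
        have h2 : (u k : ℝ) ≤ z (φ n) k + Fintype.card I := by exact_mod_cast (huk k).2
        rw [abs_le]; constructor <;> linarith
    choose u hu using hev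
    have hulim : Tendsto u atTop (𝓝 x) := by
      rw [tendsto_pi_nhds]
      intro k
      have hd : Tendsto (fun n => u n k - Z (φ n) k) atTop (𝓝 0) := by
        refine squeeze_zero_norm' (hfreq.mono fun n hn => ?_) hmφ
        exact (hu n hn).2 k
      simpa using hd.add (hlimi k)
    have hgl := (hg.tendsto x).comp hulim
    refine le_of_tendsto_of_tendsto ((tendsto_pi_nhds.1 hgl) i) ((tendsto_pi_nhds.1 hgl) j) ?_
    filter_upwards [hfreq] with n hn
    have := hlab (u n) j
    rw [(hu n hn).1] at this
    exact this

/-! ### Covering intersecting families of `d`-intervals by `d ^ 2` points -/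

theorem isClosed_of_isDInterval {d : ℕ} {e : Set ℝ} (h : IsDInterval d e) :
    IsClosed e ∧ Bornology.IsBounded e := by
  obtain ⟨n, a, b, -, -, -, rfl⟩ := h
  have : IsCompact (⋃ i, Set.Icc (a i) (b i)) := isCompact_iUnion fun i => isCompact_Icc
  exact ⟨this.isClosed, this.isBounded⟩

/-- The `k`-th cut point associated with a point of the simplex. -/
noncomputable def cutPt (R : ℝ) {n : ℕ} (k : ℕ) (x : Fin n → ℝ) : ℝ :=
  -R + 2 * R * ∑ i : Fin n, if i.val < k then x i else 0

theorem cutPt_continuous (R : ℝ) {n : ℕ} (k : ℕ) : Continuous (cutPt R (n := n) k) := by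
  unfold cutPt
  refine continuous_const.add (continuous_const.mul (continuous_finsetSum _ fun i _ => ?_))
  split_ifs
  · exact continuous_apply i
  · exact continuous_const

theorem cutPt_zero (R : ℝ) {n : ℕ} (x : Fin n → ℝ) : cutPt R 0 x = -R := by simp [cutPt]

theorem cutPt_last (R : ℝ) {n : ℕ} (x : Fin n → ℝ) (hx : x ∈ stdSimplex ℝ (Fin n)) :
    cutPt R n x = R := by
  have : ∑ i : Fin n, (if i.val < n then x i else 0) = 1 := by
    rw [← hx.2]
    exact Finset.sum_congr rfl fun i _ => if_pos i.2
  rw [cutPt, this]; ring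

theorem cutPt_mono (R : ℝ) (hR : 0 < R) {n : ℕ} (x : Fin n → ℝ) (hx : x ∈ stdSimplex ℝ (Fin n))
    {k l : ℕ} (hkl : k ≤ l) : cutPt R k x ≤ cutPt R l x := by
  unfold cutPt
  gcongr with i
  split_ifs
  · exact le_rfl
  · omega
  · exact hx.1 i
  · exact le_rfl

theorem cutPt_succ_eq (R : ℝ) {n : ℕ} (x : Fin n → ℝ) (j : Fin n) (hj : x j = 0) :
    cutPt R (j.val + 1) x = cutPt R j.val x := by
  unfold cutPt
  congr 2
  refine Finset.sum_congr rfl fun i _ => ?_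
  by_cases hij : i = j
  · subst hij; simp [hj]
  · have : i.val ≠ j.val := fun h => hij (Fin.ext h)
    have : i.val < j.val + 1 ↔ i.val < j.val := by omega
    simp [this]

theorem exists_cover (d : ℕ) (hd : 1 ≤ d)
    (H : Set (Set ℝ)) (hfin : H.Finite)
    (hH : ∀ e ∈ H, IsDInterval d e ∧ e.Nonempty)
    (hint : ∀ e ∈ H, ∀ f ∈ H, (e ∩ f).Nonempty) :
    ∃ C : Finset ℝ, C.card ≤ d ^ 2 ∧ ∀ e ∈ H, ∃ p ∈ C, p ∈ e := by
  classical
  by_contra hcon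
  push Not at hcon
  obtain ⟨f0, hf0, -⟩ := hcon ∅ (by simp)
  obtain ⟨R, hR, hHR⟩ : ∃ R : ℝ, 0 < R ∧ ∀ e ∈ H, ∀ p ∈ e, -R < p ∧ p < R := by
    have hb : Bornology.IsBounded (⋃ e ∈ H, e) :=
      (Bornology.isBounded_biUnion hfin).2 fun e he => (isClosed_of_isDInterval (hH e he).1).2
    obtain ⟨R, hR, hs⟩ := hb.subset_ball_lt 0 0
    refine ⟨R, hR, fun e he p hp => ?_⟩
    have := hs (Set.mem_biUnion he hp)
    rw [Real.ball_eq_Ioo] at this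
    simpa using this
  let Hf := hfin.toFinset
  have hHf : ∀ e, e ∈ Hf ↔ e ∈ H := fun e => hfin.mem_toFinset
  obtain ⟨P, hP⟩ : ∃ P : Finset ℝ, ∀ e ∈ H, ∀ f ∈ H, ∃ p ∈ P, p ∈ e ∧ p ∈ f := by
    refine ⟨(Hf ×ˢ Hf).image fun q => if h : (q.1 ∩ q.2).Nonempty then h.some else 0, ?_⟩
    intro e he f hf
    refine ⟨(hint e he f hf).some, Finset.mem_image.2 ⟨(e, f), ?_, ?_⟩, (hint e he f hf).some_mem⟩
    · exact Finset.mem_product.2 ⟨(hHf e).2 he, (hHf f).2 hf⟩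
    · exact dif_pos (hint e he f hf)
  have hPne : P.Nonempty := by
    obtain ⟨p, hp, -⟩ := hP f0 hf0 f0 hf0
    exact ⟨p, hp⟩
  let n := d ^ 2
  let y : ℕ → (Fin (n + 1) → ℝ) → ℝ := fun k x => cutPt R k x
  have hyc : ∀ k, Continuous (y k) := fun k => cutPt_continuous R k
  have hrne : (Finset.range (n + 2)).Nonempty := ⟨0, by simp⟩
  let φ : Set ℝ → (Fin (n + 1) → ℝ) → ℝ := fun e x =>
    (Finset.range (n + 2)).inf' hrne fun k => Metric.infDist (y k x) e
  have hφc : ∀ e, Continuous (φ e) := fun e =>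
    Continuous.finset_inf'_apply hrne fun k _ => (Metric.continuous_infDist_pt e).comp (hyc k)
  have hφ0 : ∀ e x, 0 ≤ φ e x := fun e x =>
    Finset.le_inf' _ _ fun k _ => Metric.infDist_nonneg
  have hφle : ∀ e x k, k < n + 2 → φ e x ≤ Metric.infDist (y k x) e := fun e x k hk =>
    Finset.inf'_le _ (Finset.mem_range.2 hk)
  have hφnot : ∀ e x k, k < n + 2 → 0 < φ e x → y k x ∉ e := by
    intro e x k hk h0 hmem
    have := hφle e x k hk
    rw [Metric.infDist_zero_of_mem hmem] at this
    linarith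
  let h : Set ℝ → Fin (n + 1) → (Fin (n + 1) → ℝ) → ℝ := fun e j x =>
    P.sup' hPne fun p => if p ∈ e then
      max 0 (min (φ e x) (min (p - y j.val x) (y (j.val + 1) x - p))) else 0
  have hhc : ∀ e j, Continuous (h e j) := by
    intro e j
    refine Continuous.finset_sup'_apply hPne fun p _ => ?_
    split_ifs
    · exact continuous_const.max ((hφc e).min
        ((continuous_const.sub (hyc _)).min ((hyc _).sub continuous_const)))
    · exact continuous_const
  let T : Set ℝ → (Fin (n + 1) → ℝ) → Finset (Fin (n + 1)) := fun e x =>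
    Finset.univ.filter fun j => ∃ p ∈ P, p ∈ e ∧ y j.val x < p ∧ p < y (j.val + 1) x
  have hT : ∀ e x j, j ∈ T e x ↔ ∃ p ∈ P, p ∈ e ∧ y j.val x < p ∧ p < y (j.val + 1) x := by
    intro e x j; simp [T]
  have hh : ∀ e j x, h e j x = if j ∈ T e x then φ e x else 0 := by
    intro e j x
    split_ifs with hj
    · apply le_antisymm
      · refine Finset.sup'_le _ _ fun p _ => ?_
        split_ifs
        · exact max_le (hφ0 e x) (min_le_left _ _)
        · exact hφ0 e x
      · obtain ⟨p, hp, hpe, h1, h2⟩ := (hT e x j).1 hj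
        refine le_trans ?_ (Finset.le_sup' _ hp)
        rw [if_pos hpe]
        refine le_max_of_le_right (le_min le_rfl (le_min ?_ ?_))
        · refine (hφle e x j.val (by omega)).trans ((Metric.infDist_le_dist_of_mem hpe).trans ?_)
          rw [dist_comm, Real.dist_eq, abs_of_pos (by linarith)]
        · refine (hφle e x (j.val + 1) (by omega)).trans
            ((Metric.infDist_le_dist_of_mem hpe).trans ?_)
          rw [Real.dist_eq, abs_of_pos (by linarith)]
    · rw [hT] at hj
      push Not at hj
      have hz : ∀ p ∈ P, (if p ∈ e then
          max 0 (min (φ e x) (min (p - y j.val x) (y (j.val + 1) x - p))) else 0) = 0 := by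
        intro p hp
        split_ifs with hpe
        · apply max_eq_left
          refine (min_le_right _ _).trans ?_
          by_cases hlt : y j.val x < p
          · exact (min_le_right _ _).trans (by linarith [hj p hp hpe hlt])
          · exact (min_le_left _ _).trans (by linarith)
        · rfl
      exact (Finset.sup'_congr hPne rfl hz).trans (Finset.sup'_const hPne 0)
  obtain ⟨x, hx, hbal⟩ := kkm_balanced (I := Fin (n + 1))
    (by
      have : 1 ≤ n := Nat.one_le_pow _ _ hd
      simp only [Fintype.card_fin]; omega)
    (fun x j => ∑ e ∈ Hf, h e j x)
    (continuous_pi fun j => continuous_finsetSum _ fun e _ => hhc e j)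
    (fun x j => Finset.sum_nonneg fun e _ => by
      rw [hh]; split_ifs
      · exact hφ0 e x
      · exact le_rfl)
    (fun x j hj => Finset.sum_eq_zero fun e _ => by
      rw [hh, if_neg]
      rw [hT]
      rintro ⟨p, -, -, h1, h2⟩
      have : y (j.val + 1) x = y j.val x := cutPt_succ_eq R x j hj
      linarith)
  have hy0 : y 0 x = -R := cutPt_zero R x
  have hyl : y (n + 1) x = R := cutPt_last R x hx
  have hymono : ∀ k l, k ≤ l → y k x ≤ y l x := fun k l hkl => cutPt_mono R hR x hx hkl
  -- an edge missed by the cut points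
  obtain ⟨e0, he0, hmiss⟩ := hcon ((Finset.range n).image fun k => y (k + 1) x)
    (Finset.card_image_le.trans (by simp [n]))
  have hφe0 : 0 < φ e0 x := by
    refine (Finset.lt_inf'_iff _).2 fun k hk => ?_
    have hk' := Finset.mem_range.1 hk
    refine ((isClosed_of_isDInterval (hH e0 he0).1).1.notMem_iff_infDist_pos (hH e0 he0).2).1 ?_
    intro hmem
    rcases Nat.eq_zero_or_pos k with rfl | hk0
    · have := (hHR e0 he0 _ hmem).1
      linarith
    · by_cases hkn : k = n + 1
      · subst hkn
        have := (hHR e0 he0 _ hmem).2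
        linarith
      · refine hmiss (y k x) (Finset.mem_image.2 ⟨k - 1, Finset.mem_range.2 (by omega), ?_⟩) hmem
        rw [Nat.sub_add_cancel hk0]
  have hTcard : ∀ e ∈ H, 0 < φ e x → (T e x).card ≤ d := by
    intro e he hpos
    obtain ⟨m, a, b, hm, -, -, heq⟩ := (hH e he).1
    have hch : ∀ j : Fin (n + 1), ∃ q : Fin m × ℝ, j ∈ T e x →
        q.2 ∈ Set.Icc (a q.1) (b q.1) ∧ y j.val x < q.2 ∧ q.2 < y (j.val + 1) x := by
      intro j
      by_cases hj : j ∈ T e x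
      · obtain ⟨p, -, hpe, h1, h2⟩ := (hT e x j).1 hj
        rw [heq] at hpe
        obtain ⟨i, hi⟩ := Set.mem_iUnion.1 hpe
        exact ⟨(i, p), fun _ => ⟨hi, h1, h2⟩⟩
      · obtain ⟨p, hp⟩ := (hH e he).2
        rw [heq] at hp
        obtain ⟨i, hi⟩ := Set.mem_iUnion.1 hp
        exact ⟨(i, p), fun h => absurd h hj⟩
    choose q hq using hch
    have hlt : ∀ j ∈ T e x, ∀ k ∈ T e x, j < k → (q j).1 ≠ (q k).1 := by
      intro j hj k hk hjk hqq
      obtain ⟨h1, h2, h3⟩ := hq j hj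
      obtain ⟨h4, h5, h6⟩ := hq k hk
      have h7 := hymono (j.val + 1) k.val hjk
      refine hφnot e x (j.val + 1) (by omega) hpos ?_
      rw [heq]
      refine Set.mem_iUnion.2 ⟨(q j).1, ?_, ?_⟩
      · linarith [h1.1]
      · rw [hqq]; linarith [h4.2]
    have hle : (T e x).card ≤ (Finset.univ : Finset (Fin m)).card := by
      refine Finset.card_le_card_of_injOn (fun j => (q j).1) (fun _ _ => Finset.mem_coe.2 (Finset.mem_univ _)) ?_
      intro j hj k hk hqq
      rcases lt_trichotomy j k with hjk | hjk | hjk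
      · exact absurd hqq (hlt j hj k hk hjk)
      · exact hjk
      · exact absurd hqq.symm (hlt k hk j hj hjk)
    rw [Finset.card_univ, Fintype.card_fin] at hle
    exact hle.trans hm
  have hTint : ∀ e ∈ H, 0 < φ e x → ∃ j, j ∈ T e x ∧ j ∈ T e0 x := by
    intro e he hpos
    obtain ⟨p, hp, hpe, hpe0⟩ := hP e he e0 he0
    obtain ⟨hpA, hpB⟩ := hHR e he p hpe
    have hex : ∃ k, p < y k x := ⟨n + 1, by rw [hyl]; exact hpB⟩
    have hk := Nat.find_spec hex
    have hkmin : ∀ l, l < Nat.find hex → ¬ p < y l x := fun l hl => Nat.find_min hex hl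
    have hkle : Nat.find hex ≤ n + 1 := Nat.find_min' hex (by rw [hyl]; exact hpB)
    generalize Nat.find hex = k at hk hkmin hkle
    have hk0 : k ≠ 0 := by
      rintro rfl
      linarith
    obtain ⟨l, rfl⟩ := Nat.exists_eq_succ_of_ne_zero hk0
    have h1 : y l x ≤ p := not_lt.1 (hkmin l (Nat.lt_succ_self l))
    have h2 : y l x ≠ p := fun h => hφnot e x l (by omega) hpos (h ▸ hpe)
    have h3 := lt_of_le_of_ne h1 h2
    exact ⟨⟨l, by omega⟩, (hT _ _ _).2 ⟨p, hp, hpe, h3, hk⟩, (hT _ _ _).2 ⟨p, hp, hpe0, h3, hk⟩⟩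
  -- double counting
  let c : ℝ := ∑ e ∈ Hf, h e 0 x
  have hc : ∀ j, ∑ e ∈ Hf, h e j x = c := fun j => hbal j 0
  let Φ : ℝ := ∑ e ∈ Hf, φ e x
  have hΦ : 0 < Φ := Finset.sum_pos' (fun e _ => hφ0 e x) ⟨e0, (hHf e0).2 he0, hφe0⟩
  have hsum1 : ((n : ℝ) + 1) * c ≤ d * Φ := by
    have h1 : ∑ j : Fin (n + 1), ∑ e ∈ Hf, h e j x = ((n : ℝ) + 1) * c := by
      simp only [hc, Finset.sum_const, Finset.card_univ, Fintype.card_fin, nsmul_eq_mul]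
      push_cast; ring
    rw [← h1, Finset.sum_comm, Finset.mul_sum]
    refine Finset.sum_le_sum fun e he => ?_
    simp only [hh]
    rw [Finset.sum_ite_mem, Finset.univ_inter, Finset.sum_const, nsmul_eq_mul]
    rcases (hφ0 e x).eq_or_lt with h0 | h0
    · rw [← h0]; simp
    · have := hTcard e ((hHf e).1 he) h0
      gcongr
  have hsum2 : Φ ≤ d * c := by
    have hc0 : 0 ≤ c := Finset.sum_nonneg fun e _ => by
      rw [hh]; split_ifs
      · exact hφ0 e x
      · exact le_rfl
    have h1 : ∑ j ∈ T e0 x, ∑ e ∈ Hf, h e j x ≤ d * c := by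
      simp only [hc, Finset.sum_const, nsmul_eq_mul]
      have := hTcard e0 he0 hφe0
      gcongr
    refine le_trans ?_ h1
    rw [Finset.sum_comm]
    refine Finset.sum_le_sum fun e he => ?_
    have hnn : ∀ j ∈ T e0 x, 0 ≤ h e j x := fun j _ => by
      rw [hh]; split_ifs
      · exact hφ0 e x
      · exact le_rfl
    rcases (hφ0 e x).eq_or_lt with h0 | h0
    · rw [← h0]; exact Finset.sum_nonneg hnn
    · obtain ⟨j, hj, hj0⟩ := hTint e ((hHf e).1 he) h0
      refine le_trans ?_ (Finset.single_le_sum hnn hj0)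
      rw [hh, if_pos hj]
  have hn : (n : ℝ) = (d : ℝ) ^ 2 := by simp [n]
  have hd0 : (0 : ℝ) < d := by exact_mod_cast hd
  rw [hn] at hsum1
  have h3 : (d : ℝ) * Φ ≤ d * (d * c) := mul_le_mul_of_nonneg_left hsum2 hd0.le
  have h4 : c ≤ 0 := by nlinarith
  have h5 : (d : ℝ) * c ≤ 0 := mul_nonpos_of_nonneg_of_nonpos hd0.le h4
  linarith

/-- For a finite *intersecting* hypergraph of `d`-intervals with a weight
system `w` on its edges, `τ_w(H) ≤ d²·ν_w(H)`. -/
theorem tauW_le_d_sq_mul_nuW_of_intersecting (d : ℕ) (hd : 1 ≤ d)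
    (H : Set (Set ℝ)) (hfin : H.Finite)
    (hH : ∀ e ∈ H, IsDInterval d e ∧ e.Nonempty)
    (hint : ∀ e ∈ H, ∀ f ∈ H, (e ∩ f).Nonempty) (w : Set ℝ → ℕ) :
    tauW H w ≤ d ^ 2 * nuW H w := by
  classical
  obtain ⟨C, hC, hcov⟩ := exists_cover d hd H hfin hH hint
  have hw : ∀ e ∈ H, w e ≤ nuW H w := by
    intro e he
    refine le_csSup ⟨∑ e ∈ hfin.toFinset, w e, ?_⟩ ⟨{e}, by simpa using he, by simp, by simp⟩
    rintro m ⟨M, hM, -, rfl⟩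
    exact Finset.sum_le_sum_of_subset fun f hf => hfin.mem_toFinset.2 (hM hf)
  let g : ℝ → ℕ := fun x => if x ∈ C then nuW H w else 0
  have hsupp : Function.support g ⊆ C := by
    intro x hx
    by_contra hxC
    exact hx (if_neg hxC)
  have hfs : (Function.support g).Finite := C.finite_toSet.subset hsupp
  have htot : ∑ᶠ x, g x = C.card * nuW H w := by
    rw [finsum_eq_sum_of_support_subset g hsupp]
    simp [g, Finset.sum_ite_mem]
  refine le_trans (Nat.sInf_le ⟨g, hfs, fun e he => ?_, rfl⟩) ?_
  · obtain ⟨p, hpC, hpe⟩ := hcov e he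
    have h1 : g p = nuW H w := if_pos hpC
    refine (hw e he).trans (h1.symm.le.trans ?_)
    rw [finsum_mem_def]
    have h2 := single_le_finsum (f := Set.indicator e g) p
      (hfs.subset (Function.support_subset_iff'.2 fun x hx => by
        have : g x = 0 := Function.notMem_support.1 hx
        simp [Set.indicator, this])) (fun _ => Nat.zero_le _)
    rwa [Set.indicator_of_mem hpe] at h2
  · rw [htot]
    exact Nat.mul_le_mul_right _ hC
end
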